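/- Let p : ℝ^d → ℝ be a smooth probability density function with p(x) ≠ 0 for all x ∈ ℝ^d. For each σ > 0, let r_σ : ℝ^d → ℝ^d be a twice continuously differentiable function that minimizes the RCAE loss L_σ among all twice continuously differentiable functions with finite loss. Then for every fixed x ∈ ℝ^d, the Jacobian satisfies ‖Dr_σ(x) − I − σ² ∇²log p(x)‖ = o(σ²) as σ → 0⁺, where ∇²log p(x) is the Hessian matrix of log p at x and I is the d×d identity matrix. -/

import Mathlib

/-!
The minimizer satisfies, in each component, the Euler–Lagrange equation
`p (r - id)_i = σ² div (p ∇rᵢ)` (`euler_lagrange`). Put `q = √p` and `Y = q (r - id)_i`.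
Multiplication by `q` removes the first order term, and the equation becomes
`Y - σ² T Y = 2σ² ∂ᵢq` with the Schrödinger operator `T = Δ - Δq/q` (`ground_state`). The formal
solution is `Y = σ² k + σ⁴ T k + ⋯`, `k = 2 ∂ᵢq`. Since `k / q = ∂ᵢ log p`, the leading term
is the one predicted for `r - id`.

The remainder `Z = Y - σ² k - σ⁴ T k` solves `Z - σ² T Z = σ⁶ T² k` exactly
(`remainder_solves`), so it remains to bound `Z` and `∇Z` locally. No behaviour of `p` at infinity
is available; the only global information is the comparison of the loss with that of the identity
map, which gives `∫ p |r - id|² ≤ d σ²` (`energy_bound`), hence `Z = O(σ)` in local `L²`. This is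
improved in three steps.

* The equation gives `σ² Δ(Z²) ≥ (1 + 2σ² Δq/q) Z² - σ¹² (T² k)²`. Tested against a cutoff, this
  bounds `∫ Z²` on a compact set by `σ²` times `∫ Z²` on a larger one, plus `O(σ¹²)`
  (`Solves.localDecay_step`). Three iterations give `∫ Z² = O(σ⁸)` locally.
* The same inequality makes `Z²` almost subharmonic, and the mean value inequality on unit balls
  gives `sup |Z| = O(σ⁴)` locally (`Solves.sup_bound`).
* The equation then gives `ΔZ = O(σ²)`, and the interior gradient estimate on a ball of radius `σ`
  gives `∇Z = O(σ⁴ / σ + σ · σ²) = O(σ³)` (`Solves.pointwise`).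

Dividing by `q` and differentiating, each entry of `Dr - I - σ² ∇² log p` is `O(σ³)`
(`entry_isBigO`), which is stronger than `o(σ²)`.

The mean value inequality and the gradient estimate both come from a pair of bump profiles with
`∇Ψ(z) = -ψ(z) z` (`MeanKernel`), for which `d/ds ∫ f(x + s z) ψ(z) dz = s ∫ Δf(x + s z) Ψ(z) dz`.
-/

open MeasureTheory Real Filter Topology Asymptotics

/-- The squared Frobenius norm of a linear map `ℝ^d → ℝ^d`, computed as the sum of the
squared Euclidean norms of the images of the standard basis vectors. -/
noncomputable def frobSq (d : ℕ)
    (f : EuclideanSpace ℝ (Fin d) →L[ℝ] EuclideanSpace ℝ (Fin d)) : ℝ :=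
  ∑ j : Fin d, ‖f (EuclideanSpace.single j 1)‖ ^ 2

/-- The RCAE loss:
`L_σ(r) = ∫ p(x) [‖r(x) − x‖² + σ² ‖Dr(x)‖_F²] dx`. -/
noncomputable def rcaeLoss (d : ℕ) (σ : ℝ) (p : EuclideanSpace ℝ (Fin d) → ℝ)
    (r : EuclideanSpace ℝ (Fin d) → EuclideanSpace ℝ (Fin d)) : ℝ :=
  ∫ x, p x * (‖r x - x‖ ^ 2 + σ ^ 2 * frobSq d (fderiv ℝ r x))

/-! ### Partial derivatives and integration by parts -/

section Calculus

variable {d : ℕ}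

/-- The `j`-th partial derivative of a function on `ℝ^d`. -/
noncomputable def pd (j : Fin d) (f : EuclideanSpace ℝ (Fin d) → ℝ) :
    EuclideanSpace ℝ (Fin d) → ℝ :=
  fun x => fderiv ℝ f x (EuclideanSpace.single j 1)

/-- The Laplacian, as the sum of the pure second partial derivatives. -/
noncomputable def lap (f : EuclideanSpace ℝ (Fin d) → ℝ) : EuclideanSpace ℝ (Fin d) → ℝ :=
  fun x => ∑ j, pd j (pd j f) x

lemma ContDiff.pd {f : EuclideanSpace ℝ (Fin d) → ℝ} {n m : WithTop ℕ∞} (hf : ContDiff ℝ n f)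
    (h : m + 1 ≤ n) (j : Fin d) : ContDiff ℝ m (pd j f) :=
  (hf.fderiv_right h).clm_apply contDiff_const

lemma ContDiff.pd_smooth {f : EuclideanSpace ℝ (Fin d) → ℝ} (hf : ContDiff ℝ (⊤ : ℕ∞) f)
    (j : Fin d) : ContDiff ℝ (⊤ : ℕ∞) (_root_.pd j f) :=
  hf.pd (by norm_num) j

lemma ContDiff.lap_smooth {f : EuclideanSpace ℝ (Fin d) → ℝ} (hf : ContDiff ℝ (⊤ : ℕ∞) f) :
    ContDiff ℝ (⊤ : ℕ∞) (lap f) :=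
  ContDiff.sum fun j _ => (hf.pd_smooth j).pd_smooth j

lemma ContDiff.continuous_pd {f : EuclideanSpace ℝ (Fin d) → ℝ} (hf : ContDiff ℝ 1 f)
    (j : Fin d) : Continuous (_root_.pd j f) :=
  (hf.pd (m := 0) (by norm_num) j).continuous

lemma ContDiff.pd_one {f : EuclideanSpace ℝ (Fin d) → ℝ} (hf : ContDiff ℝ 2 f)
    (j : Fin d) : ContDiff ℝ 1 (_root_.pd j f) :=
  hf.pd (by norm_num) j

lemma ContDiff.continuous_lap {f : EuclideanSpace ℝ (Fin d) → ℝ} (hf : ContDiff ℝ 2 f) :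
    Continuous (lap f) :=
  continuous_finsetSum _ fun j _ => (hf.pd_one j).continuous_pd j

lemma pd_hasCompactSupport {f : EuclideanSpace ℝ (Fin d) → ℝ} (hf : HasCompactSupport f)
    (j : Fin d) : HasCompactSupport (pd j f) :=
  hf.fderiv_apply ℝ _

lemma lap_hasCompactSupport {f : EuclideanSpace ℝ (Fin d) → ℝ} (hf : HasCompactSupport f) :
    HasCompactSupport (lap f) := by
  unfold lap
  refine HasCompactSupport.intro (K := tsupport f) hf fun x hx => ?_
  refine Finset.sum_eq_zero fun j _ => image_eq_zero_of_notMem_tsupport fun h => hx ?_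
  have h1 : ∀ g : EuclideanSpace ℝ (Fin d) → ℝ, tsupport (pd j g) ⊆ tsupport g := fun g =>
    tsupport_fderiv_apply_subset ℝ _
  exact h1 _ (h1 _ h)

lemma pd_add {f g : EuclideanSpace ℝ (Fin d) → ℝ} (hf : Differentiable ℝ f)
    (hg : Differentiable ℝ g) (j : Fin d) :
    pd j (fun x => f x + g x) = fun x => pd j f x + pd j g x := by
  funext x
  simp only [pd]
  rw [fderiv_fun_add (hf x) (hg x)]; rfl

lemma pd_sub {f g : EuclideanSpace ℝ (Fin d) → ℝ} (hf : Differentiable ℝ f)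
    (hg : Differentiable ℝ g) (j : Fin d) :
    pd j (fun x => f x - g x) = fun x => pd j f x - pd j g x := by
  funext x
  simp only [pd]
  rw [fderiv_fun_sub (hf x) (hg x)]; rfl

lemma pd_const_mul {f : EuclideanSpace ℝ (Fin d) → ℝ} (hf : Differentiable ℝ f) (c : ℝ)
    (j : Fin d) : pd j (fun x => c * f x) = fun x => c * pd j f x := by
  funext x
  simp only [pd]
  rw [fderiv_const_mul (hf x)]; rfl

lemma pd_mul {f g : EuclideanSpace ℝ (Fin d) → ℝ} (hf : Differentiable ℝ f)
    (hg : Differentiable ℝ g) (j : Fin d) :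
    pd j (fun x => f x * g x) = fun x => pd j f x * g x + f x * pd j g x := by
  funext x
  simp only [pd]
  rw [fderiv_fun_mul (hf x) (hg x)]
  simp; ring

lemma pd_coord (i j : Fin d) (x : EuclideanSpace ℝ (Fin d)) :
    pd j (fun y : EuclideanSpace ℝ (Fin d) => y i) x = if i = j then 1 else 0 := by
  have h : (fun y : EuclideanSpace ℝ (Fin d) => y i) = EuclideanSpace.proj (𝕜 := ℝ) i := rfl
  rw [pd, h, ContinuousLinearMap.fderiv]
  simp

lemma pd_comm {f : EuclideanSpace ℝ (Fin d) → ℝ} (hf : ContDiff ℝ 2 f) (i j : Fin d)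
    (x : EuclideanSpace ℝ (Fin d)) : pd i (pd j f) x = pd j (pd i f) x := by
  have hs : IsSymmSndFDerivAt ℝ f x := hf.contDiffAt.isSymmSndFDerivAt (by simp)
  have hd : DifferentiableAt ℝ (fderiv ℝ f) x :=
    ((hf.fderiv_right (m := 1) (by norm_num)).differentiable (by norm_num)) x
  have key : ∀ i j : Fin d, pd i (pd j f) x =
      fderiv ℝ (fderiv ℝ f) x (EuclideanSpace.single i 1) (EuclideanSpace.single j 1) := by
    intro i j
    unfold pd
    rw [fderiv_clm_apply hd (differentiableAt_const _)]
    simp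
  rw [key, key, hs.eq]

lemma lap_add {f g : EuclideanSpace ℝ (Fin d) → ℝ} (hf : ContDiff ℝ 2 f)
    (hg : ContDiff ℝ 2 g) : lap (fun x => f x + g x) = fun x => lap f x + lap g x := by
  funext x
  simp only [lap, ← Finset.sum_add_distrib]
  refine Finset.sum_congr rfl fun j _ => ?_
  rw [pd_add (hf.differentiable (by norm_num)) (hg.differentiable (by norm_num)),
    pd_add ((hf.pd_one j).differentiable (by norm_num))
      ((hg.pd_one j).differentiable (by norm_num))]

lemma lap_const_mul {f : EuclideanSpace ℝ (Fin d) → ℝ} (hf : ContDiff ℝ 2 f) (c : ℝ) :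
    lap (fun x => c * f x) = fun x => c * lap f x := by
  funext x
  simp only [lap, Finset.mul_sum]
  refine Finset.sum_congr rfl fun j _ => ?_
  rw [pd_const_mul (hf.differentiable (by norm_num)),
    pd_const_mul ((hf.pd_one j).differentiable (by norm_num))]

lemma lap_sub {f g : EuclideanSpace ℝ (Fin d) → ℝ} (hf : ContDiff ℝ 2 f)
    (hg : ContDiff ℝ 2 g) : lap (fun x => f x - g x) = fun x => lap f x - lap g x := by
  funext x
  simp only [lap, ← Finset.sum_sub_distrib]
  refine Finset.sum_congr rfl fun j _ => ?_
  rw [pd_sub (hf.differentiable (by norm_num)) (hg.differentiable (by norm_num)),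
    pd_sub ((hf.pd_one j).differentiable (by norm_num))
      ((hg.pd_one j).differentiable (by norm_num))]

lemma lap_mul {f g : EuclideanSpace ℝ (Fin d) → ℝ} (hf : ContDiff ℝ 2 f)
    (hg : ContDiff ℝ 2 g) : lap (fun x => f x * g x) =
      fun x => lap f x * g x + 2 * (∑ j, pd j f x * pd j g x) + f x * lap g x := by
  funext x
  simp only [lap, Finset.sum_mul, Finset.mul_sum, ← Finset.sum_add_distrib]
  refine Finset.sum_congr rfl fun j _ => ?_
  have hf0 := hf.differentiable (by norm_num : (2 : WithTop ℕ∞) ≠ 0)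
  have hg0 := hg.differentiable (by norm_num : (2 : WithTop ℕ∞) ≠ 0)
  have hf1 := (hf.pd_one j).differentiable (by norm_num)
  have hg1 := (hg.pd_one j).differentiable (by norm_num)
  rw [pd_mul hf0 hg0, pd_add (hf1.fun_mul hg0) (hf0.fun_mul hg1), pd_mul hf1 hg0, pd_mul hf0 hg1]
  ring

/-- Integration by parts against a compactly supported function. -/
lemma integral_pd_mul {f g : EuclideanSpace ℝ (Fin d) → ℝ} (hf : ContDiff ℝ 1 f)
    (hg : ContDiff ℝ 1 g) (hc : HasCompactSupport g) (j : Fin d) :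
    ∫ x, pd j f x * g x = - ∫ x, f x * pd j g x := by
  have hd := hf.differentiable (by norm_num)
  have hd' := hg.differentiable (by norm_num)
  have := integral_mul_fderiv_eq_neg_fderiv_mul_of_integrable (μ := volume) (f := f) (g := g)
    (v := EuclideanSpace.single j (1 : ℝ))
    (((hf.continuous_pd j).mul hg.continuous).integrable_of_hasCompactSupport hc.mul_left)
    ((hf.continuous.mul (hg.continuous_pd j)).integrable_of_hasCompactSupport
      (pd_hasCompactSupport hc j).mul_left)
    ((hf.continuous.mul hg.continuous).integrable_of_hasCompactSupport hc.mul_left)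
    (fun x _ => hd x) (fun x _ => hd' x)
  simp only [pd]
  rw [this]; simp

lemma integral_lap_mul {f g : EuclideanSpace ℝ (Fin d) → ℝ} (hf : ContDiff ℝ 2 f)
    (hg : ContDiff ℝ 2 g) (hc : HasCompactSupport g) :
    ∫ x, lap f x * g x = ∫ x, f x * lap g x := by
  simp only [lap, Finset.sum_mul, Finset.mul_sum]
  rw [integral_finsetSum, integral_finsetSum]
  · refine Finset.sum_congr rfl fun j _ => ?_
    rw [integral_pd_mul (hf.pd_one j) (hg.of_le (by norm_num)) hc,
      integral_pd_mul (hf.of_le (by norm_num)) (hg.pd_one j) (pd_hasCompactSupport hc j), neg_neg]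
  · intro j _
    exact (hf.continuous.mul ((hg.pd_one j).continuous_pd j)).integrable_of_hasCompactSupport
      (pd_hasCompactSupport (pd_hasCompactSupport hc j) j).mul_left
  · intro j _
    exact (((hf.pd_one j).continuous_pd j).mul hg.continuous).integrable_of_hasCompactSupport
      hc.mul_left

/-- Chain rule for the affine map `z ↦ x + s z`. -/
lemma pd_comp_affine {f : EuclideanSpace ℝ (Fin d) → ℝ} (hf : Differentiable ℝ f)
    (x : EuclideanSpace ℝ (Fin d)) (s : ℝ) (j : Fin d) :
    pd j (fun z => f (x + s • z)) = fun z => s * pd j f (x + s • z) := by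
  funext z
  have h : HasFDerivAt (fun z => x + s • z)
      (s • ContinuousLinearMap.id ℝ (EuclideanSpace ℝ (Fin d))) z :=
    ((hasFDerivAt_id z).const_smul s).const_add x
  have := (hf (x + s • z)).hasFDerivAt.comp z h
  simp only [pd]
  rw [show (fun z => f (x + s • z)) = f ∘ (fun z => x + s • z) from rfl, this.fderiv]
  simp

/-- A vector expands in the standard basis. -/
lemma sum_single (v : EuclideanSpace ℝ (Fin d)) :
    ∑ j, v j • EuclideanSpace.single j (1 : ℝ) = v := by
  ext i
  simp [Finset.sum_apply, Pi.single_apply]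

lemma fderiv_eq_sum_pd (f : EuclideanSpace ℝ (Fin d) → ℝ) (x v : EuclideanSpace ℝ (Fin d)) :
    fderiv ℝ f x v = ∑ j, v j * pd j f x := by
  conv_lhs => rw [← sum_single v]
  simp [pd, map_sum]

end Calculus

/-! ### Mean value inequality and interior gradient estimate -/

section Kernel

variable {d : ℕ}

/-- A pair of nonnegative smooth profiles supported in the closed unit ball, with `ψ` of positive
mass and `∇Ψ(z) = -ψ(z) z`. Averages against `ψ` over balls of radius `s` then have `s`-derivative
equal to `s` times the `Ψ`-average of the Laplacian. -/
structure MeanKernel (Ψ ψ : EuclideanSpace ℝ (Fin d) → ℝ) : Prop where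
  smooth : ContDiff ℝ (⊤ : ℕ∞) Ψ
  smooth' : ContDiff ℝ (⊤ : ℕ∞) ψ
  nonneg : ∀ z, 0 ≤ Ψ z
  nonneg' : ∀ z, 0 ≤ ψ z
  supp : ∀ z, z ∉ Metric.closedBall (0 : EuclideanSpace ℝ (Fin d)) 1 → Ψ z = 0
  supp' : ∀ z, z ∉ Metric.closedBall (0 : EuclideanSpace ℝ (Fin d)) 1 → ψ z = 0
  mass : 0 < ∫ z, ψ z
  grad : ∀ j z, pd j Ψ z = -(z j * ψ z)

/-- For `d ≥ 1` the profile `Ψ(z) = χ(1 - |z|²)`, with `χ` the smooth transition function,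
gives such a pair, with `ψ(z) = 2 χ'(1 - |z|²)`. -/
lemma exists_meanKernel (i : Fin d) :
    ∃ Ψ ψ : EuclideanSpace ℝ (Fin d) → ℝ, MeanKernel Ψ ψ := by
  have hT : ContDiff ℝ (⊤ : ℕ∞) Real.smoothTransition := Real.smoothTransition.contDiff
  have hT' : ContDiff ℝ (⊤ : ℕ∞) (deriv Real.smoothTransition) :=
    (contDiff_infty_iff_deriv.1 hT).2
  have hn : ContDiff ℝ (⊤ : ℕ∞) (fun z : EuclideanSpace ℝ (Fin d) => 1 - ‖z‖ ^ 2) :=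
    contDiff_const.sub (contDiff_norm_sq ℝ)
  have hpos : ∀ r, 0 ≤ deriv Real.smoothTransition r := fun r =>
    Real.smoothTransition.monotone.deriv_nonneg
  have hneg : ∀ z : EuclideanSpace ℝ (Fin d), z ∉ Metric.closedBall 0 1 → 1 - ‖z‖ ^ 2 < 0 := by
    intro z hz
    simp only [Metric.mem_closedBall, dist_zero_right, not_le] at hz
    nlinarith
  have hsupp' : ∀ z : EuclideanSpace ℝ (Fin d), z ∉ Metric.closedBall 0 1 →
      2 * deriv Real.smoothTransition (1 - ‖z‖ ^ 2) = 0 := by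
    intro z hz
    have : Real.smoothTransition =ᶠ[𝓝 (1 - ‖z‖ ^ 2)] fun _ => 0 := by
      filter_upwards [Iio_mem_nhds (hneg z hz)] with y hy
      exact Real.smoothTransition.zero_of_nonpos hy.le
    rw [this.deriv_eq]; simp
  have hsm' : ContDiff ℝ (⊤ : ℕ∞)
      (fun z : EuclideanSpace ℝ (Fin d) => 2 * deriv Real.smoothTransition (1 - ‖z‖ ^ 2)) :=
    contDiff_const.mul (hT'.comp hn)
  refine ⟨fun z => Real.smoothTransition (1 - ‖z‖ ^ 2),
    fun z => 2 * deriv Real.smoothTransition (1 - ‖z‖ ^ 2), hT.comp hn, hsm',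
    fun z => Real.smoothTransition.nonneg _, fun z => mul_nonneg two_pos.le (hpos _),
    fun z hz => Real.smoothTransition.zero_of_nonpos (hneg z hz).le, hsupp', ?_, ?_⟩
  · -- `χ` increases from `0` to `1`, so `χ'` equals `1` at some radius in `(0,1)`.
    obtain ⟨r, hr, hr'⟩ := exists_deriv_eq_slope Real.smoothTransition (zero_lt_one)
      Real.smoothTransition.continuous.continuousOn
      (hT.differentiable (by simp)).differentiableOn
    rw [Real.smoothTransition.one, Real.smoothTransition.zero] at hr'
    refine hsm'.continuous.integral_pos_of_hasCompactSupport_nonneg_nonzero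
      (HasCompactSupport.intro (isCompact_closedBall 0 1) hsupp')
      (fun z => mul_nonneg two_pos.le (hpos _))
      (x := EuclideanSpace.single i (Real.sqrt (1 - r))) ?_
    have : 1 - ‖EuclideanSpace.single i (Real.sqrt (1 - r))‖ ^ 2 = r := by
      rw [PiLp.norm_single, Real.norm_eq_abs, sq_abs, Real.sq_sqrt (by linarith [hr.2])]
      ring
    rw [this, hr']; norm_num
  · intro j z
    have h1 : HasFDerivAt (fun z : EuclideanSpace ℝ (Fin d) => 1 - ‖z‖ ^ 2)
        (-(2 • innerSL ℝ z)) z := (hasStrictFDerivAt_norm_sq z).hasFDerivAt.const_sub 1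
    have h2 := ((hT.differentiable (by simp)) (1 - ‖z‖ ^ 2)).hasDerivAt.comp_hasFDerivAt z h1
    simp only [pd]
    rw [show (fun z : EuclideanSpace ℝ (Fin d) => Real.smoothTransition (1 - ‖z‖ ^ 2)) =
      Real.smoothTransition ∘ fun z => 1 - ‖z‖ ^ 2 from rfl, h2.fderiv]
    simp [EuclideanSpace.inner_single_right]
    ring

lemma MeanKernel.compact {Ψ ψ : EuclideanSpace ℝ (Fin d) → ℝ} (hK : MeanKernel Ψ ψ) :
    HasCompactSupport Ψ :=
  HasCompactSupport.intro (isCompact_closedBall 0 1) hK.supp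

lemma MeanKernel.compact' {Ψ ψ : EuclideanSpace ℝ (Fin d) → ℝ} (hK : MeanKernel Ψ ψ) :
    HasCompactSupport ψ :=
  HasCompactSupport.intro (isCompact_closedBall 0 1) hK.supp'

/-- Derivative in the scale `s` of the `ψ`-weighted average of `f` around `x`. -/
lemma hasDerivAt_average {f ψ : EuclideanSpace ℝ (Fin d) → ℝ} (hf : ContDiff ℝ 1 f)
    (hψ : Continuous ψ) (hc : HasCompactSupport ψ) (x : EuclideanSpace ℝ (Fin d)) (s : ℝ) :
    HasDerivAt (fun s : ℝ => ∫ z, f (x + s • z) * ψ z)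
      (∫ z, fderiv ℝ f (x + s • z) z * ψ z) s := by
  have hfc := hf.continuous
  have hfd : Continuous (fderiv ℝ f) := hf.continuous_fderiv (by norm_num)
  have hcont : Continuous fun q : ℝ × EuclideanSpace ℝ (Fin d) =>
      fderiv ℝ f (x + q.1 • q.2) q.2 := by fun_prop
  obtain ⟨C, hC⟩ := ((isCompact_closedBall s 1).prod hc).exists_bound_of_continuousOn
    hcont.continuousOn
  refine (hasDerivAt_integral_of_dominated_loc_of_deriv_le (μ := volume)
    (F := fun s z => f (x + s • z) * ψ z)
    (F' := fun s z => fderiv ℝ f (x + s • z) z * ψ z)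
    (bound := fun z => C * ‖ψ z‖) (Metric.closedBall_mem_nhds s one_pos) ?_ ?_ ?_ ?_ ?_ ?_).2
  · exact Eventually.of_forall fun s => (by fun_prop : Continuous _).aestronglyMeasurable
  · exact (by fun_prop : Continuous _).integrable_of_hasCompactSupport hc.mul_left
  · exact (by fun_prop : Continuous _).aestronglyMeasurable
  · refine Eventually.of_forall fun z t ht => ?_
    rw [norm_mul]
    by_cases hz : z ∈ tsupport ψ
    · exact mul_le_mul_of_nonneg_right (hC (t, z) ⟨ht, hz⟩) (norm_nonneg _)
    · simp [image_eq_zero_of_notMem_tsupport hz]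
  · exact (by fun_prop : Continuous _).integrable_of_hasCompactSupport hc.norm.mul_left
  · refine Eventually.of_forall fun z t _ => ?_
    have h : HasDerivAt (fun t : ℝ => x + t • z) z t := by
      simpa using ((hasDerivAt_id t).smul_const z).const_add x
    exact (((hf.differentiable (by norm_num)) (x + t • z)).hasFDerivAt.comp_hasDerivAt t h).mul_const _

lemma MeanKernel.integral_fderiv {Ψ ψ : EuclideanSpace ℝ (Fin d) → ℝ} (hK : MeanKernel Ψ ψ)
    {f : EuclideanSpace ℝ (Fin d) → ℝ} (hf : ContDiff ℝ 1 f)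
    (x : EuclideanSpace ℝ (Fin d)) (s : ℝ) :
    ∫ z, fderiv ℝ f (x + s • z) z * ψ z = -∑ j, ∫ z, pd j f (x + s • z) * pd j Ψ z := by
  rw [← integral_finsetSum, ← integral_neg]
  · refine integral_congr_ae (Eventually.of_forall fun z => ?_)
    simp only [fderiv_eq_sum_pd f, Finset.sum_mul, ← Finset.sum_neg_distrib, hK.grad]
    exact Finset.sum_congr rfl fun j _ => by ring
  · intro j _
    have h1 := hf.continuous_pd j
    have h2 := (hK.smooth.of_le (m := 1) (by norm_num)).continuous_pd j
    exact (by fun_prop : Continuous _).integrable_of_hasCompactSupport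
      (pd_hasCompactSupport hK.compact j).mul_left

lemma contDiff_affine {f : EuclideanSpace ℝ (Fin d) → ℝ} {n : WithTop ℕ∞} (hf : ContDiff ℝ n f)
    (x : EuclideanSpace ℝ (Fin d)) (s : ℝ) : ContDiff ℝ n (fun z => f (x + s • z)) :=
  hf.comp (contDiff_const.add (contDiff_const_smul s))

lemma MeanKernel.hasDerivAt_average_lap {Ψ ψ : EuclideanSpace ℝ (Fin d) → ℝ}
    (hK : MeanKernel Ψ ψ) {f : EuclideanSpace ℝ (Fin d) → ℝ} (hf : ContDiff ℝ 2 f)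
    (x : EuclideanSpace ℝ (Fin d)) (s : ℝ) :
    HasDerivAt (fun s : ℝ => ∫ z, f (x + s • z) * ψ z)
      (s * ∫ z, lap f (x + s • z) * Ψ z) s := by
  have hf1 : ContDiff ℝ 1 f := hf.of_le (by norm_num)
  have h := hasDerivAt_average hf1 hK.smooth'.continuous hK.compact' x s
  rw [hK.integral_fderiv hf1] at h
  convert h using 1
  have hΨ1 : ContDiff ℝ 1 Ψ := hK.smooth.of_le (by norm_num)
  have hc := hΨ1.continuous
  rw [← Finset.sum_neg_distrib, ← integral_const_mul]
  simp only [lap, Finset.sum_mul, Finset.mul_sum]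
  rw [integral_finsetSum]
  · refine Finset.sum_congr rfl fun j _ => ?_
    rw [← integral_pd_mul (contDiff_affine (hf.pd_one j) x s) hΨ1 hK.compact,
      pd_comp_affine ((hf.pd_one j).differentiable (by norm_num))]
    simp only [mul_assoc]
  · intro j _
    have h1 := (hf.pd_one j).continuous_pd j
    exact (by fun_prop : Continuous _).integrable_of_hasCompactSupport
      hK.compact.mul_left.mul_left

/-- Mean value inequality for a `C²` function with Laplacian bounded below: the weighted average
at scale `s` has derivative at least `-K ∫ Ψ`, and equals `f x ∫ ψ` at `s = 0`. -/
lemma MeanKernel.mean_value_le {Ψ ψ : EuclideanSpace ℝ (Fin d) → ℝ}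
    (hK : MeanKernel Ψ ψ) {f : EuclideanSpace ℝ (Fin d) → ℝ} (hf : ContDiff ℝ 2 f)
    (x : EuclideanSpace ℝ (Fin d)) {K : ℝ} (hK0 : 0 ≤ K)
    (hl : ∀ y ∈ Metric.closedBall x 1, -K ≤ lap f y) :
    f x * ∫ z, ψ z ≤ (∫ z, f (x + z) * ψ z) + K * ∫ z, Ψ z := by
  have hd := fun s => hK.hasDerivAt_average_lap hf x s
  obtain ⟨s, hs, hs'⟩ := exists_hasDerivAt_eq_slope _ _ zero_lt_one
    (fun s _ => (hd s).continuousAt.continuousWithinAt) (fun s _ => hd s)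
  have hlc := hf.continuous_lap
  have hΨc := hK.smooth.continuous
  have hI : -(K * ∫ z, Ψ z) ≤ ∫ z, lap f (x + s • z) * Ψ z := by
    rw [← neg_mul, ← integral_const_mul]
    refine integral_mono
      ((by fun_prop : Continuous _).integrable_of_hasCompactSupport hK.compact.mul_left)
      ((by fun_prop : Continuous _).integrable_of_hasCompactSupport hK.compact.mul_left)
      fun z => ?_
    by_cases hz : z ∈ Metric.closedBall (0 : EuclideanSpace ℝ (Fin d)) 1
    · refine mul_le_mul_of_nonneg_right (hl _ ?_) (hK.nonneg z)
      simp only [Metric.mem_closedBall, dist_zero_right, dist_self_add_left, norm_smul] at hz ⊢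
      rw [Real.norm_eq_abs, abs_of_pos hs.1]
      nlinarith [hs.1, hs.2, norm_nonneg z]
    · simp [hK.supp z hz]
  have hI0 : 0 ≤ K * ∫ z, Ψ z := mul_nonneg hK0 (integral_nonneg hK.nonneg)
  simp only [one_smul, zero_smul, add_zero, integral_const_mul, sub_zero, div_one] at hs'
  nlinarith [hs.1, hs.2]

/-- Interior gradient estimate on a ball of radius `t`, from sup bounds on `f` and `Δf`. The
weighted averages of `∂ᵢf` at scales `0` and `t` are compared; the derivative falls on the weight
both at scale `t` and in the rate of change of the average. -/
lemma MeanKernel.gradient_le {Ψ ψ : EuclideanSpace ℝ (Fin d) → ℝ}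
    (hK : MeanKernel Ψ ψ) {f : EuclideanSpace ℝ (Fin d) → ℝ} (hf : ContDiff ℝ 2 f)
    (x : EuclideanSpace ℝ (Fin d)) {M K t : ℝ} (ht : 0 < t)
    (hM : ∀ y ∈ Metric.closedBall x t, |f y| ≤ M)
    (hl : ∀ y ∈ Metric.closedBall x t, |lap f y| ≤ K) (i : Fin d) :
    |pd i f x| * ∫ z, ψ z ≤
      M / t * (∫ z, |pd i ψ z|) + t * (K * ∫ z, |pd i Ψ z|) := by
  have hd := fun s => hasDerivAt_average (hf.pd_one i) hK.smooth'.continuous hK.compact' x s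
  obtain ⟨s, hs, hs'⟩ := exists_hasDerivAt_eq_slope _ _ ht
    (fun s _ => (hd s).continuousAt.continuousWithinAt) (fun s _ => hd s)
  have hfc := hf.continuous
  have hlc := hf.continuous_lap
  have hΨ2 : ContDiff ℝ 2 Ψ := hK.smooth.of_le (by norm_cast)
  have hψ1 : ContDiff ℝ 1 ψ := hK.smooth'.of_le (by norm_num)
  have hΨi := (hΨ2.pd_one i).continuous
  have hψi := hψ1.continuous_pd i
  have hcΨi := pd_hasCompactSupport hK.compact i
  have hcψi := pd_hasCompactSupport hK.compact' i
  -- Two integrations by parts turn `∂ⱼ∂ᵢf` tested on `∂ⱼΨ` into `∂ⱼ∂ⱼf` tested on `∂ᵢΨ`, without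
  -- using a third derivative of `f`.
  have hswap : ∫ z, fderiv ℝ (pd i f) (x + s • z) z * ψ z =
      -∫ z, lap f (x + s • z) * pd i Ψ z := by
    rw [hK.integral_fderiv (hf.pd_one i)]
    congr 1
    simp only [lap, Finset.sum_mul]
    rw [integral_finsetSum]
    · refine Finset.sum_congr rfl fun j _ => ?_
      have hF : ContDiff ℝ 1 (fun z => pd j f (x + s • z)) := contDiff_affine (hf.pd_one j) x s
      have hD := (hf.pd_one j).differentiable (by norm_num : (1 : WithTop ℕ∞) ≠ 0)
      have e1 := integral_pd_mul hF (hΨ2.pd_one j) (pd_hasCompactSupport hK.compact j) i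
      have e2 := integral_pd_mul hF (hΨ2.pd_one i) hcΨi j
      simp only [pd_comp_affine hD] at e1 e2
      have e3 : ∀ z, pd i (pd j Ψ) z = pd j (pd i Ψ) z := fun z => pd_comm hΨ2 i j z
      simp only [e3] at e1
      rw [← e2] at e1
      simp only [mul_assoc, integral_const_mul] at e1
      simp only [pd_comm hf j i]
      have e4 := mul_left_cancel₀ hs.1.ne' e1
      simpa only [pd_comm hf j i] using e4
    · intro j _
      have h1 := (hf.pd_one j).continuous_pd j
      exact (by fun_prop : Continuous _).integrable_of_hasCompactSupport hcΨi.mul_left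
  have hball : ∀ {z : EuclideanSpace ℝ (Fin d)} {s : ℝ}, z ∈ Metric.closedBall 0 1 → 0 ≤ s →
      s ≤ t → x + s • z ∈ Metric.closedBall x t := by
    intro z s hz h0 h1
    simp only [Metric.mem_closedBall, dist_zero_right, dist_self_add_left, norm_smul] at hz ⊢
    rw [Real.norm_eq_abs, abs_of_nonneg h0]
    nlinarith [norm_nonneg z]
  have hzero : ∀ {φ : EuclideanSpace ℝ (Fin d) → ℝ}, (∀ z, z ∉ Metric.closedBall 0 1 → φ z = 0) →
      ∀ z, z ∉ Metric.closedBall 0 1 → pd i φ z = 0 := by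
    intro φ hφ z hz
    have : φ =ᶠ[𝓝 z] fun _ => 0 := by
      filter_upwards [Metric.isClosed_closedBall.isOpen_compl.mem_nhds hz] with y hy
      exact hφ y hy
    simp [pd, this.fderiv_eq]
  have habs : ∀ {g φ : EuclideanSpace ℝ (Fin d) → ℝ} {s B : ℝ}, Continuous g → Continuous φ →
      HasCompactSupport φ → (∀ z, z ∉ Metric.closedBall 0 1 → φ z = 0) →
      (∀ y ∈ Metric.closedBall x t, |g y| ≤ B) → 0 ≤ s → s ≤ t →
      |∫ z, g (x + s • z) * φ z| ≤ B * ∫ z, |φ z| := by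
    intro g φ s B hg hφ hcφ h0 hB hs0 hst
    rw [← integral_const_mul]
    refine (abs_integral_le_integral_abs).trans (integral_mono
      ((by fun_prop : Continuous _).integrable_of_hasCompactSupport
        (hcφ.mul_left (f := fun z => g (x + s • z))).norm)
      ((by fun_prop : Continuous _).integrable_of_hasCompactSupport hcφ.norm.mul_left) fun z => ?_)
    simp only [abs_mul]
    by_cases hz : z ∈ Metric.closedBall (0 : EuclideanSpace ℝ (Fin d)) 1
    · exact mul_le_mul_of_nonneg_right (hB _ (hball hz hs0 hst)) (abs_nonneg _)
    · simp [h0 z hz]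
  have b1 := habs hlc hΨi hcΨi (hzero hK.supp) hl hs.1.le hs.2.le
  have b2 := habs hfc hψi hcψi (hzero hK.supp') hM ht.le le_rfl
  have hend : t * ∫ z, pd i f (x + t • z) * ψ z = -∫ z, f (x + t • z) * pd i ψ z := by
    have := integral_pd_mul (contDiff_affine (hf.of_le (by norm_num : (1 : WithTop ℕ∞) ≤ 2)) x t)
      hψ1 hK.compact' i
    rw [← this, pd_comp_affine (hf.differentiable (by norm_num)), ← integral_const_mul]
    simp only [mul_assoc]
  rw [hswap] at hs'
  simp only [zero_smul, add_zero, integral_const_mul, sub_zero] at hs'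
  have e : pd i f x * ∫ z, ψ z = (-∫ z, f (x + t • z) * pd i ψ z) / t
      + t * ∫ z, lap f (x + s • z) * pd i Ψ z := by
    rw [← hend]
    field_simp at hs' ⊢
    linarith
  calc |pd i f x| * ∫ z, ψ z = |pd i f x * ∫ z, ψ z| := by rw [abs_mul, abs_of_pos hK.mass]
    _ ≤ |(-∫ z, f (x + t • z) * pd i ψ z) / t| + |t * ∫ z, lap f (x + s • z) * pd i Ψ z| := by
      rw [e]; exact abs_add_le _ _
    _ ≤ _ := by
      rw [abs_div, abs_neg, abs_mul, abs_of_pos ht, div_mul_eq_mul_div]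
      gcongr

end Kernel

/-! ### Local estimates for a singularly perturbed equation -/

section SingularPerturbation

variable {d : ℕ}

lemma exists_smooth_ge_one {K : Set (EuclideanSpace ℝ (Fin d))} (hK : IsCompact K) :
    ∃ η : EuclideanSpace ℝ (Fin d) → ℝ, ContDiff ℝ (⊤ : ℕ∞) η ∧ HasCompactSupport η ∧
      (∀ z, 0 ≤ η z) ∧ ∀ z ∈ K, 1 ≤ η z := by
  obtain ⟨R, hR⟩ := hK.isBounded.subset_closedBall (0 : EuclideanSpace ℝ (Fin d))
  let b : ContDiffBump (0 : EuclideanSpace ℝ (Fin d)) :=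
    ⟨|R| + 1, |R| + 2, by positivity, by linarith⟩
  refine ⟨b, b.contDiff, b.hasCompactSupport, fun z => b.nonneg, fun z hz => ?_⟩
  refine (b.one_of_mem_closedBall ?_).ge
  exact Metric.closedBall_subset_closedBall (by linarith [le_abs_self R] : R ≤ |R| + 1) (hR hz)

lemma exists_smooth_ge_abs {θ : EuclideanSpace ℝ (Fin d) → ℝ} (hθ : Continuous θ)
    (hc : HasCompactSupport θ) :
    ∃ η : EuclideanSpace ℝ (Fin d) → ℝ, ContDiff ℝ (⊤ : ℕ∞) η ∧ HasCompactSupport η ∧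
      (∀ z, 0 ≤ η z) ∧ ∀ z, |θ z| ≤ η z := by
  obtain ⟨η, h1, h2, h3, h4⟩ := exists_smooth_ge_one hc
  obtain ⟨C, hC⟩ := hθ.bounded_above_of_compact_support hc
  have hC0 : 0 ≤ C := (norm_nonneg _).trans (hC 0)
  refine ⟨fun z => C * η z, contDiff_const.mul h1, h2.mul_left,
    fun z => mul_nonneg hC0 (h3 z), fun z => ?_⟩
  by_cases hz : z ∈ tsupport θ
  · have := hC z
    rw [Real.norm_eq_abs] at this
    nlinarith [h4 z hz]
  · rw [image_eq_zero_of_notMem_tsupport hz, abs_zero]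
    exact mul_nonneg hC0 (h3 z)

/-- `∫ Z_σ² θ = O(σ^m)` from above on `0 < σ ≤ 1`, for every localising weight `θ`. -/
def LocalDecay (Z : ℝ → EuclideanSpace ℝ (Fin d) → ℝ) (m : ℕ) : Prop :=
  ∀ θ : EuclideanSpace ℝ (Fin d) → ℝ, Continuous θ → HasCompactSupport θ →
    ∃ C, ∀ σ : ℝ, 0 < σ → σ ≤ 1 → ∫ z, Z σ z ^ 2 * θ z ≤ C * σ ^ m

/-- The family `Z_σ` solves `Z - σ²(Δ - V) Z = σ⁶ H`. -/
structure Solves (V H : EuclideanSpace ℝ (Fin d) → ℝ)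
    (Z : ℝ → EuclideanSpace ℝ (Fin d) → ℝ) : Prop where
  contV : Continuous V
  contH : Continuous H
  smooth : ∀ σ > 0, ContDiff ℝ 2 (Z σ)
  eqn : ∀ σ > 0, ∀ y, Z σ y - σ ^ 2 * (lap (Z σ) y - V y * Z σ y) = σ ^ 6 * H y

variable {V H : EuclideanSpace ℝ (Fin d) → ℝ} {Z : ℝ → EuclideanSpace ℝ (Fin d) → ℝ}

/-- `Z²` is almost subharmonic; the nonnegative term `2|∇Z|²` is dropped. -/
lemma Solves.lap_sq_ge (h : Solves V H Z) {σ : ℝ} (hσ : 0 < σ) (y : EuclideanSpace ℝ (Fin d)) :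
    Z σ y ^ 2 - (σ ^ 6 * H y) ^ 2 + 2 * σ ^ 2 * V y * Z σ y ^ 2 ≤
      σ ^ 2 * lap (fun y => Z σ y ^ 2) y := by
  have hs := h.smooth σ hσ
  have e := h.eqn σ hσ y
  simp only [pow_two (Z σ _), lap_mul hs hs]
  have h1 : 0 ≤ ∑ j, pd j (Z σ) y * pd j (Z σ) y :=
    Finset.sum_nonneg fun j _ => mul_self_nonneg _
  have h2 : 0 ≤ σ ^ 2 * ∑ j, pd j (Z σ) y * pd j (Z σ) y := by positivity
  have h3 : σ ^ 2 * lap (Z σ) y = Z σ y + σ ^ 2 * V y * Z σ y - σ ^ 6 * H y := by linarith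
  have h4 : σ ^ 2 * (lap (Z σ) y * Z σ y +
      2 * (∑ j, pd j (Z σ) y * pd j (Z σ) y) + Z σ y * lap (Z σ) y) =
      2 * (σ ^ 2 * lap (Z σ) y) * Z σ y + 2 * (σ ^ 2 * ∑ j, pd j (Z σ) y * pd j (Z σ) y) := by ring
  rw [h4, h3]
  nlinarith [sq_nonneg (Z σ y - σ ^ 6 * H y)]

/-- Testing the almost subharmonicity of `Z²` against a cutoff gains a factor `σ²`, at the cost
of a larger cutoff. The forcing contributes `σ¹²`, which caps the iteration. -/
lemma Solves.localDecay_step (h : Solves V H Z) {m : ℕ} (hm : m + 2 ≤ 12)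
    (hd : LocalDecay Z m) : LocalDecay Z (m + 2) := by
  intro θ hθ hc
  obtain ⟨η, hη, hηc, hη0, hηθ⟩ := exists_smooth_ge_abs hθ hc
  have hη2 : ContDiff ℝ 2 η := hη.of_le (by norm_cast)
  have hηcont := hη.continuous
  have hlη := hη2.continuous_lap
  have hlc := lap_hasCompactSupport hηc
  have hV := h.contV
  have hH := h.contH
  obtain ⟨C, hC⟩ := hd (fun z => lap η z - 2 * V z * η z) (by fun_prop)
    (hlc.sub hηc.mul_left)
  refine ⟨C + ∫ z, H z ^ 2 * η z, fun σ hσ hσ1 => ?_⟩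
  have hs := h.smooth σ hσ
  have hZc := hs.continuous
  have hsq : ContDiff ℝ 2 (fun y => Z σ y ^ 2) := hs.pow 2
  have hlsq := hsq.continuous_lap
  have i1 : ∫ z, Z σ z ^ 2 * θ z ≤ ∫ z, Z σ z ^ 2 * η z :=
    integral_mono ((by fun_prop : Continuous _).integrable_of_hasCompactSupport hc.mul_left)
      ((by fun_prop : Continuous _).integrable_of_hasCompactSupport hηc.mul_left)
      fun z => mul_le_mul_of_nonneg_left ((le_abs_self _).trans (hηθ z)) (sq_nonneg _)
  have i2 : ∫ z, Z σ z ^ 2 * η z ≤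
      ∫ z, (σ ^ 12 * (H z ^ 2 * η z) + (σ ^ 2 * (lap (fun y => Z σ y ^ 2) z * η z) -
        2 * σ ^ 2 * (V z * Z σ z ^ 2 * η z))) := by
    refine integral_mono
      ((by fun_prop : Continuous _).integrable_of_hasCompactSupport hηc.mul_left)
      ((by fun_prop : Continuous _).integrable_of_hasCompactSupport
        ((hηc.mul_left.mul_left).add ((hηc.mul_left.mul_left).sub hηc.mul_left.mul_left)))
      fun z => ?_
    have := mul_le_mul_of_nonneg_right (h.lap_sq_ge hσ z) (hη0 z)
    simp only
    linarith
  have int1 : Integrable (fun z => σ ^ 12 * (H z ^ 2 * η z)) :=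
    (by fun_prop : Continuous _).integrable_of_hasCompactSupport hηc.mul_left.mul_left
  have int2 : Integrable (fun z => σ ^ 2 * (lap (fun y => Z σ y ^ 2) z * η z)) :=
    (by fun_prop : Continuous _).integrable_of_hasCompactSupport hηc.mul_left.mul_left
  have int3 : Integrable (fun z => 2 * σ ^ 2 * (V z * Z σ z ^ 2 * η z)) :=
    (by fun_prop : Continuous _).integrable_of_hasCompactSupport hηc.mul_left.mul_left
  have int23 : Integrable (fun z => σ ^ 2 * (lap (fun y => Z σ y ^ 2) z * η z) -
      2 * σ ^ 2 * (V z * Z σ z ^ 2 * η z)) := int2.sub int3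
  rw [integral_add int1 int23, integral_sub int2 int3, integral_const_mul,
    integral_const_mul, integral_const_mul, integral_lap_mul hsq hη2 hηc] at i2
  have i3 : ∫ z, Z σ z ^ 2 * (lap η z - 2 * V z * η z) =
      (∫ z, Z σ z ^ 2 * lap η z) - 2 * ∫ z, V z * Z σ z ^ 2 * η z := by
    rw [← integral_const_mul, ← integral_sub]
    · exact integral_congr_ae (Eventually.of_forall fun z => by simp only; ring)
    · exact (by fun_prop : Continuous _).integrable_of_hasCompactSupport hlc.mul_left
    · exact (by fun_prop : Continuous _).integrable_of_hasCompactSupport hηc.mul_left.mul_left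
  have i4 := hC σ hσ hσ1
  rw [i3] at i4
  have hI : 0 ≤ ∫ z, H z ^ 2 * η z :=
    integral_nonneg fun z => mul_nonneg (sq_nonneg _) (hη0 z)
  have hpow : σ ^ 12 ≤ σ ^ (m + 2) := pow_le_pow_of_le_one hσ.le hσ1 hm
  have i5 := mul_le_mul_of_nonneg_left i4 (sq_nonneg σ)
  have i6 := mul_le_mul_of_nonneg_right hpow hI
  calc _ ≤ _ := i1
    _ ≤ _ := i2
    _ ≤ σ ^ (m + 2) * (∫ z, H z ^ 2 * η z) + σ ^ 2 * (C * σ ^ m) := by linarith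
    _ = _ := by rw [pow_add]; ring

/-- Pointwise bound near `x₀`. The local `L²` decay is first improved to `σ⁸`; for small `σ` the
potential is absorbed, so that `Δ(Z²) ≥ -Cσ¹⁰`, and the mean value inequality on balls of radius
one applies to `Z²`. The index `i` serves only to guarantee `d ≥ 1`. -/
lemma Solves.sup_bound (h : Solves V H Z) (hd : LocalDecay Z 2) (i : Fin d)
    (x₀ : EuclideanSpace ℝ (Fin d)) :
    ∃ C σ₀ : ℝ, 0 ≤ C ∧ 0 < σ₀ ∧ σ₀ ≤ 1 ∧ ∀ σ, 0 < σ → σ ≤ σ₀ →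
      ∀ y ∈ Metric.closedBall x₀ 1, |Z σ y| ≤ C * σ ^ 4 := by
  have hd8 : LocalDecay Z 8 := h.localDecay_step (by norm_num) (h.localDecay_step (by norm_num)
    (h.localDecay_step (by norm_num) hd))
  obtain ⟨Ψ, ψ, hK⟩ := exists_meanKernel i
  obtain ⟨η, hη, hηc, hη0, hη1⟩ := exists_smooth_ge_one (isCompact_closedBall x₀ 2)
  obtain ⟨A, hA⟩ := hK.smooth'.continuous.bounded_above_of_compact_support hK.compact'
  have hA0 : 0 ≤ A := (norm_nonneg _).trans (hA 0)
  obtain ⟨B, hB⟩ := (isCompact_closedBall x₀ 2).exists_bound_of_continuousOn h.contH.continuousOn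
  obtain ⟨W, hW⟩ := (isCompact_closedBall x₀ 2).exists_bound_of_continuousOn h.contV.continuousOn
  have hW0 : 0 ≤ W := (norm_nonneg _).trans (hW x₀ (Metric.mem_closedBall_self (by norm_num)))
  have hB0 : 0 ≤ B := (norm_nonneg _).trans (hB x₀ (Metric.mem_closedBall_self (by norm_num)))
  have hηcont := hη.continuous
  obtain ⟨C, hC⟩ := hd8 (fun z => A * η z) (by fun_prop) hηc.mul_left
  set c := ∫ z, ψ z with hc
  have hcpos : 0 < c := hK.mass
  set D := |C| + B ^ 2 * ∫ z, Ψ z with hD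
  have hΨ0 : 0 ≤ ∫ z, Ψ z := integral_nonneg hK.nonneg
  have hD0 : 0 ≤ D := by positivity
  refine ⟨Real.sqrt (D / c), 1 / (1 + 2 * W), Real.sqrt_nonneg _, by positivity, ?_, ?_⟩
  · rw [div_le_one (by positivity)]; linarith
  intro σ hσ hσ0 y hy
  have hWσ : σ * (1 + 2 * W) ≤ 1 := by rwa [le_div_iff₀ (by positivity)] at hσ0
  have hσ1 : σ ≤ 1 := by nlinarith
  have hs := h.smooth σ hσ
  have hZc := hs.continuous
  have hψcont := hK.smooth'.continuous
  have hsub : ∀ z ∈ Metric.closedBall y 1, z ∈ Metric.closedBall x₀ 2 := by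
    intro z hz
    simp only [Metric.mem_closedBall] at *
    linarith [dist_triangle z y x₀]
  have mv := hK.mean_value_le (hs.pow 2) y (K := σ ^ 10 * B ^ 2) (by positivity) (fun z hz => by
    have h1 := h.lap_sq_ge hσ z
    have h2 := hW z (hsub z hz)
    have h3 := hB z (hsub z hz)
    rw [Real.norm_eq_abs] at h2 h3
    have h4 : H z ^ 2 ≤ B ^ 2 := sq_le_sq' (by linarith [neg_abs_le (H z)]) ((le_abs_self _).trans h3)
    have h5 : -1 ≤ 2 * σ ^ 2 * V z := by
      have := neg_abs_le (V z)
      nlinarith [mul_pos hσ hσ]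
    have h6 : σ ^ 2 * -(σ ^ 10 * B ^ 2) ≤ σ ^ 2 * lap (fun y => Z σ y ^ 2) z := by
      have h7 : (σ ^ 6 * H z) ^ 2 ≤ σ ^ 12 * B ^ 2 := by
        rw [mul_pow, ← pow_mul]; gcongr
      nlinarith [sq_nonneg (Z σ z)]
    exact le_of_mul_le_mul_left h6 (by positivity))
  have i1 : ∫ z, Z σ (y + z) ^ 2 * ψ z ≤ ∫ z, Z σ z ^ 2 * (A * η z) := by
    have e : ∫ z, Z σ (y + z) ^ 2 * ψ z = ∫ z, Z σ z ^ 2 * ψ (z - y) := by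
      rw [← integral_add_left_eq_self (μ := volume) (fun z => Z σ z ^ 2 * ψ (z - y)) y]
      simp
    rw [e]
    have hcs : HasCompactSupport (fun z => ψ (z - y)) :=
      hK.compact'.comp_homeomorph (Homeomorph.subRight y)
    refine integral_mono
      ((by fun_prop : Continuous _).integrable_of_hasCompactSupport hcs.mul_left)
      ((by fun_prop : Continuous _).integrable_of_hasCompactSupport hηc.mul_left.mul_left)
      fun z => mul_le_mul_of_nonneg_left ?_ (sq_nonneg _)
    by_cases hz : z ∈ Metric.closedBall y 1
    · have h1 := (le_abs_self _).trans (hA (z - y))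
      nlinarith [hη1 z (hsub z hz)]
    · rw [hK.supp' (z - y) (by simpa [dist_eq_norm] using hz)]
      exact mul_nonneg hA0 (hη0 z)
  have i2 := hC σ hσ hσ1
  have hpow : σ ^ 10 ≤ σ ^ 8 := pow_le_pow_of_le_one hσ.le hσ1 (by norm_num)
  have i3 : C * σ ^ 8 ≤ |C| * σ ^ 8 := by gcongr; exact le_abs_self C
  have i4 : σ ^ 10 * B ^ 2 * (∫ z, Ψ z) ≤ σ ^ 8 * B ^ 2 * (∫ z, Ψ z) := by gcongr
  have i5 : Z σ y ^ 2 * c ≤ D * σ ^ 8 := by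
    rw [hD, hc]; linarith
  refine abs_le_of_sq_le_sq ?_ (by positivity)
  rw [mul_pow, Real.sq_sqrt (by positivity), ← pow_mul, div_mul_eq_mul_div, le_div_iff₀ hcpos]
  exact i5

/-- Both `Z_σ` and its gradient are `O(σ³)` at a point: the gradient estimate is applied on the
ball of radius `σ`, the natural length scale of the equation. -/
lemma Solves.pointwise (h : Solves V H Z) (hd : LocalDecay Z 2) (i : Fin d)
    (x₀ : EuclideanSpace ℝ (Fin d)) :
    (fun σ => Z σ x₀) =O[𝓝[>] (0 : ℝ)] (fun σ => σ ^ 3) ∧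
    (fun σ => pd i (Z σ) x₀) =O[𝓝[>] (0 : ℝ)] (fun σ => σ ^ 3) := by
  obtain ⟨C, σ₀, hC0, hσ₀, hσ₀1, hC⟩ := h.sup_bound hd i x₀
  obtain ⟨Ψ, ψ, hK⟩ := exists_meanKernel i
  obtain ⟨B, hB⟩ := (isCompact_closedBall x₀ 1).exists_bound_of_continuousOn h.contH.continuousOn
  obtain ⟨W, hW⟩ := (isCompact_closedBall x₀ 1).exists_bound_of_continuousOn h.contV.continuousOn
  have hW0 : 0 ≤ W := (norm_nonneg _).trans (hW x₀ (Metric.mem_closedBall_self (by norm_num)))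
  have hB0 : 0 ≤ B := (norm_nonneg _).trans (hB x₀ (Metric.mem_closedBall_self (by norm_num)))
  have hev : ∀ᶠ σ in 𝓝[>] (0 : ℝ), 0 < σ ∧ σ ≤ σ₀ := by
    filter_upwards [Ioc_mem_nhdsGT hσ₀] with σ hσ using hσ
  constructor
  · refine IsBigO.of_bound C ?_
    filter_upwards [hev] with σ hσ
    have h1 := hC σ hσ.1 hσ.2 x₀ (Metric.mem_closedBall_self (by norm_num))
    have hpow : σ ^ 4 ≤ σ ^ 3 :=
      pow_le_pow_of_le_one hσ.1.le (hσ.2.trans hσ₀1) (by norm_num)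
    rw [Real.norm_eq_abs, Real.norm_eq_abs, abs_of_pos (pow_pos hσ.1 3)]
    exact h1.trans (by gcongr)
  · set a := ∫ z, |pd i ψ z|
    set b := ∫ z, |pd i Ψ z|
    have ha : 0 ≤ a := integral_nonneg fun _ => abs_nonneg _
    have hb : 0 ≤ b := integral_nonneg fun _ => abs_nonneg _
    have hc := hK.mass
    refine IsBigO.of_bound ((C * a + (C + W * C + B) * b) / ∫ z, ψ z) ?_
    filter_upwards [hev] with σ hσ
    obtain ⟨hσ, hσ'⟩ := hσ
    have hσ1 := hσ'.trans hσ₀1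
    have hsub : Metric.closedBall x₀ σ ⊆ Metric.closedBall x₀ 1 :=
      Metric.closedBall_subset_closedBall hσ1
    have g := hK.gradient_le (h.smooth σ hσ) x₀ (M := C * σ ^ 4) (K := (C + W * C + B) * σ ^ 2) hσ
      (fun y hy => hC σ hσ hσ' y (hsub hy)) (fun y hy => by
        have e := h.eqn σ hσ y
        have h1 := hC σ hσ hσ' y (hsub hy)
        have h2 := hW y (hsub hy)
        have h3 := hB y (hsub hy)
        rw [Real.norm_eq_abs] at h2 h3
        have e1 : σ ^ 2 * lap (Z σ) y = Z σ y + σ ^ 2 * (V y * Z σ y) - σ ^ 6 * H y := by linarith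
        have e2 : σ ^ 2 * |lap (Z σ) y| ≤ σ ^ 2 * ((C + W * C + B) * σ ^ 2) := by
          rw [← abs_of_pos (pow_pos hσ 2), ← abs_mul, abs_of_pos (pow_pos hσ 2), e1]
          have h4 : |V y * Z σ y| ≤ W * (C * σ ^ 4) := by
            rw [abs_mul]; gcongr
          have h5 : |σ ^ 2 * (V y * Z σ y)| ≤ σ ^ 2 * (W * (C * σ ^ 4)) := by
            rw [abs_mul, abs_of_pos (pow_pos hσ 2)]; gcongr
          have h6 : |σ ^ 6 * H y| ≤ σ ^ 6 * B := by
            rw [abs_mul, abs_of_pos (pow_pos hσ 6)]; gcongr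
          have hpow : σ ^ 6 ≤ σ ^ 4 := pow_le_pow_of_le_one hσ.le hσ1 (by norm_num)
          have h7 : σ ^ 6 * (W * C + B) ≤ σ ^ 4 * (W * C + B) := by gcongr
          calc _ ≤ |Z σ y| + |σ ^ 2 * (V y * Z σ y)| + |σ ^ 6 * H y| :=
                (abs_sub _ _).trans (by gcongr; exact abs_add_le _ _)
            _ ≤ C * σ ^ 4 + σ ^ 2 * (W * (C * σ ^ 4)) + σ ^ 6 * B := by gcongr
            _ ≤ _ := by nlinarith
        exact le_of_mul_le_mul_left e2 (by positivity)) i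
    rw [Real.norm_eq_abs, Real.norm_eq_abs, abs_of_pos (pow_pos hσ 3), div_mul_eq_mul_div,
      le_div_iff₀ hc]
    refine g.trans (le_of_eq ?_)
    field_simp
    ring

end SingularPerturbation

/-! ### Euler–Lagrange equation and energy bound -/

section EulerLagrange

variable {d : ℕ}

lemma norm_add_smul_single_sq (v : EuclideanSpace ℝ (Fin d)) (c : ℝ) (i : Fin d) :
    ‖v + c • EuclideanSpace.single i (1 : ℝ)‖ ^ 2 = ‖v‖ ^ 2 + 2 * c * v i + c ^ 2 := by
  rw [norm_add_sq_real, norm_smul, inner_smul_right, EuclideanSpace.inner_single_right]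
  simp
  ring

lemma fderiv_coord {r : EuclideanSpace ℝ (Fin d) → EuclideanSpace ℝ (Fin d)}
    {x : EuclideanSpace ℝ (Fin d)} (hr : DifferentiableAt ℝ r x) (i j : Fin d) :
    (fderiv ℝ r x (EuclideanSpace.single j 1)) i = pd j (fun z => r z i) x := by
  have h := (EuclideanSpace.proj (𝕜 := ℝ) i).hasFDerivAt.comp x hr.hasFDerivAt
  have e : (fun z => r z i) = (EuclideanSpace.proj (𝕜 := ℝ) i) ∘ r := rfl
  rw [pd, e, h.fderiv]
  rfl

lemma contDiff_coord {r : EuclideanSpace ℝ (Fin d) → EuclideanSpace ℝ (Fin d)} {n : WithTop ℕ∞}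
    (hr : ContDiff ℝ n r) (i : Fin d) : ContDiff ℝ n (fun z => r z i) :=
  (EuclideanSpace.proj (𝕜 := ℝ) i).contDiff.comp hr

/-- Expansion of the loss integrand under the perturbation `r + τ φ e_i`. -/
lemma integrand_expand {p φ : EuclideanSpace ℝ (Fin d) → ℝ}
    {r : EuclideanSpace ℝ (Fin d) → EuclideanSpace ℝ (Fin d)} (σ τ : ℝ)
    (hr : Differentiable ℝ r) (hφ : Differentiable ℝ φ) (i : Fin d)
    (x : EuclideanSpace ℝ (Fin d)) :
    p x * (‖(r x + (τ * φ x) • EuclideanSpace.single i (1 : ℝ)) - x‖ ^ 2 + σ ^ 2 * frobSq d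
      (fderiv ℝ (fun x => r x + (τ * φ x) • EuclideanSpace.single i (1 : ℝ)) x)) =
    p x * (‖r x - x‖ ^ 2 + σ ^ 2 * frobSq d (fderiv ℝ r x)) +
      (2 * τ * (p x * ((r x i - x i) * φ x +
        σ ^ 2 * ∑ j, pd j (fun z => r z i) x * pd j φ x)) +
      τ ^ 2 * (p x * (φ x ^ 2 + σ ^ 2 * ∑ j, pd j φ x ^ 2))) := by
  have hD : ∀ j, fderiv ℝ (fun x => r x + (τ * φ x) • EuclideanSpace.single i (1 : ℝ)) x
      (EuclideanSpace.single j 1) = fderiv ℝ r x (EuclideanSpace.single j 1) +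
        (τ * pd j φ x) • EuclideanSpace.single i (1 : ℝ) := by
    intro j
    have h2 : HasFDerivAt (fun x => (τ * φ x) • EuclideanSpace.single i (1 : ℝ))
        ((τ • fderiv ℝ φ x).smulRight (EuclideanSpace.single i (1 : ℝ))) x :=
      ((hφ x).hasFDerivAt.const_mul τ).smul_const _
    rw [((hr x).hasFDerivAt.fun_add h2).fderiv]
    simp [pd]
  have e1 : (r x + (τ * φ x) • EuclideanSpace.single i (1 : ℝ)) - x =
      (r x - x) + (τ * φ x) • EuclideanSpace.single i (1 : ℝ) := by abel
  rw [e1, norm_add_smul_single_sq]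
  simp only [frobSq, hD, norm_add_smul_single_sq, Finset.sum_add_distrib, fderiv_coord (hr x)]
  have s1 : ∑ j, 2 * (τ * pd j φ x) * pd j (fun z => r z i) x =
      2 * τ * ∑ j, pd j (fun z => r z i) x * pd j φ x := by
    rw [Finset.mul_sum]; exact Finset.sum_congr rfl fun j _ => by ring
  have s2 : ∑ j, (τ * pd j φ x) ^ 2 = τ ^ 2 * ∑ j, pd j φ x ^ 2 := by
    rw [Finset.mul_sum]; exact Finset.sum_congr rfl fun j _ => by ring
  rw [s1, s2]
  simp only [PiLp.sub_apply]
  ring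

lemma eq_zero_of_quadratic_nonneg {A B : ℝ} (hB : 0 ≤ B)
    (h : ∀ τ : ℝ, 0 ≤ 2 * τ * A + τ ^ 2 * B) : A = 0 := by
  have h1 := h (-A / (B + 1))
  have h2 : 2 * (-A / (B + 1)) * A + (-A / (B + 1)) ^ 2 * B =
      -(A ^ 2 * (B + 2)) / (B + 1) ^ 2 := by
    field_simp; ring
  rw [h2, le_div_iff₀ (by positivity)] at h1
  have : A ^ 2 = 0 := by nlinarith [sq_nonneg A, mul_nonneg (sq_nonneg A) hB]
  exact pow_eq_zero_iff (two_ne_zero) |>.1 this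

/-- First variation of the loss in the `i`-th component. -/
lemma weak_euler_lagrange {p φ : EuclideanSpace ℝ (Fin d) → ℝ}
    {r : EuclideanSpace ℝ (Fin d) → EuclideanSpace ℝ (Fin d)} {σ : ℝ}
    (hp : Continuous p) (hp0 : ∀ x, 0 < p x) (hr : ContDiff ℝ 2 r)
    (hfin : Integrable (fun x => p x * (‖r x - x‖ ^ 2 + σ ^ 2 * frobSq d (fderiv ℝ r x))))
    (hmin : ∀ s : EuclideanSpace ℝ (Fin d) → EuclideanSpace ℝ (Fin d), ContDiff ℝ 2 s →
      Integrable (fun x => p x * (‖s x - x‖ ^ 2 + σ ^ 2 * frobSq d (fderiv ℝ s x))) →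
        rcaeLoss d σ p r ≤ rcaeLoss d σ p s)
    (hφ : ContDiff ℝ 2 φ) (hc : HasCompactSupport φ) (i : Fin d) :
    ∫ x, p x * ((r x i - x i) * φ x + σ ^ 2 * ∑ j, pd j (fun z => r z i) x * pd j φ x) = 0 := by
  have hφ1 : ContDiff ℝ 1 φ := hφ.of_le (by norm_num)
  have hri := contDiff_coord hr i
  have hri1 : ContDiff ℝ 1 (fun z => r z i) := hri.of_le (by norm_num)
  have hric := hri.continuous
  have hφc := hφ.continuous
  have hpdφ := fun j => hφ1.continuous_pd j
  have hpdr := fun j => hri1.continuous_pd j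
  have hzero : ∀ x, x ∉ tsupport φ → φ x = 0 ∧ ∀ j, pd j φ x = 0 := by
    intro x hx
    refine ⟨image_eq_zero_of_notMem_tsupport hx, fun j => ?_⟩
    exact image_eq_zero_of_notMem_tsupport fun h => hx (tsupport_fderiv_apply_subset ℝ _ h)
  have intA : Integrable (fun x => p x * ((r x i - x i) * φ x +
      σ ^ 2 * ∑ j, pd j (fun z => r z i) x * pd j φ x)) := by
    refine (by fun_prop : Continuous _).integrable_of_hasCompactSupport
      (HasCompactSupport.intro hc fun x hx => ?_)
    simp [hzero x hx]
  have intB : Integrable (fun x => p x * (φ x ^ 2 + σ ^ 2 * ∑ j, pd j φ x ^ 2)) := by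
    refine (by fun_prop : Continuous _).integrable_of_hasCompactSupport
      (HasCompactSupport.intro hc fun x hx => ?_)
    simp [hzero x hx]
  refine eq_zero_of_quadratic_nonneg (B := ∫ x, p x * (φ x ^ 2 + σ ^ 2 * ∑ j, pd j φ x ^ 2))
    (integral_nonneg fun x => mul_nonneg (hp0 x).le (by positivity)) fun τ => ?_
  have hexp := integrand_expand (p := p) σ τ (hr.differentiable (by norm_num))
    (hφ.differentiable (by norm_num)) i
  have intAB : Integrable (fun x => 2 * τ * (p x * ((r x i - x i) * φ x +
      σ ^ 2 * ∑ j, pd j (fun z => r z i) x * pd j φ x)) +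
      τ ^ 2 * (p x * (φ x ^ 2 + σ ^ 2 * ∑ j, pd j φ x ^ 2))) :=
    (intA.const_mul _).add (intB.const_mul _)
  have h := hmin (fun x => r x + (τ * φ x) • EuclideanSpace.single i (1 : ℝ))
    (hr.add ((contDiff_const.mul hφ).smul contDiff_const))
    (by simp only [hexp]; exact hfin.add intAB)
  unfold rcaeLoss at h
  simp only [hexp] at h
  rw [integral_add hfin intAB, integral_add (intA.const_mul _) (intB.const_mul _),
    integral_const_mul, integral_const_mul] at h
  linarith

/-- The Euler–Lagrange equation in divergence form, `p (r - id)_i = σ² div (p ∇rᵢ)`. -/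
lemma euler_lagrange {p : EuclideanSpace ℝ (Fin d) → ℝ}
    {r : EuclideanSpace ℝ (Fin d) → EuclideanSpace ℝ (Fin d)} {σ : ℝ}
    (hp : ContDiff ℝ 1 p) (hp0 : ∀ x, 0 < p x) (hr : ContDiff ℝ 2 r)
    (hfin : Integrable (fun x => p x * (‖r x - x‖ ^ 2 + σ ^ 2 * frobSq d (fderiv ℝ r x))))
    (hmin : ∀ s : EuclideanSpace ℝ (Fin d) → EuclideanSpace ℝ (Fin d), ContDiff ℝ 2 s →
      Integrable (fun x => p x * (‖s x - x‖ ^ 2 + σ ^ 2 * frobSq d (fderiv ℝ s x))) →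
        rcaeLoss d σ p r ≤ rcaeLoss d σ p s) (i : Fin d) (x : EuclideanSpace ℝ (Fin d)) :
    p x * (r x i - x i) = σ ^ 2 * ∑ j, pd j (fun y => p y * pd j (fun z => r z i) y) x := by
  have hri := contDiff_coord hr i
  have hric := hri.continuous
  have hpc := hp.continuous
  have hflux : ∀ j, ContDiff ℝ 1 (fun y => p y * pd j (fun z => r z i) y) :=
    fun j => hp.mul (hri.pd_one j)
  have hfc := fun j => (hflux j).continuous_pd j
  have hcont : Continuous fun x =>
      p x * (r x i - x i) - σ ^ 2 * ∑ j, pd j (fun y => p y * pd j (fun z => r z i) y) x := by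
    fun_prop
  have hae := ae_eq_zero_of_integral_contDiff_smul_eq_zero (μ := volume) hcont.locallyIntegrable
    (fun φ hφ hc => by
      have hφ2 : ContDiff ℝ 2 φ := hφ.of_le (by norm_cast)
      have hφ1 : ContDiff ℝ 1 φ := hφ.of_le (by norm_num)
      have hφc := hφ.continuous
      have hpdφ := fun j => hφ1.continuous_pd j
      have hpdr := fun j => (hri.pd_one j).continuous
      have hw := weak_euler_lagrange hpc hp0 hr hfin hmin hφ2 hc i
      have j1 : Integrable (fun x => p x * (r x i - x i) * φ x) :=
        (by fun_prop : Continuous _).integrable_of_hasCompactSupport hc.mul_left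
      have j2 : ∀ j, Integrable (fun x => p x * pd j (fun z => r z i) x * pd j φ x) := fun j =>
        (by fun_prop : Continuous _).integrable_of_hasCompactSupport
          (pd_hasCompactSupport hc j).mul_left
      have j3 : ∀ j, Integrable
          (fun x => pd j (fun y => p y * pd j (fun z => r z i) y) x * φ x) := fun j =>
        (by fun_prop : Continuous _).integrable_of_hasCompactSupport hc.mul_left
      have e1 : ∫ x, p x * ((r x i - x i) * φ x +
          σ ^ 2 * ∑ j, pd j (fun z => r z i) x * pd j φ x) =
          (∫ x, p x * (r x i - x i) * φ x) +
            σ ^ 2 * ∑ j, ∫ x, p x * pd j (fun z => r z i) x * pd j φ x := by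
        rw [← integral_finsetSum _ fun j _ => j2 j, ← integral_const_mul, ← integral_add j1
          ((integrable_finsetSum _ fun j _ => j2 j).const_mul _)]
        refine integral_congr_ae (Eventually.of_forall fun x => ?_)
        simp only [mul_add, Finset.mul_sum]
        congr 1
        · ring
        · exact Finset.sum_congr rfl fun j _ => by ring
      have e2 : ∫ x, φ x • (p x * (r x i - x i) -
          σ ^ 2 * ∑ j, pd j (fun y => p y * pd j (fun z => r z i) y) x) =
          (∫ x, p x * (r x i - x i) * φ x) -
            σ ^ 2 * ∑ j, ∫ x, pd j (fun y => p y * pd j (fun z => r z i) y) x * φ x := by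
        rw [← integral_finsetSum _ fun j _ => j3 j, ← integral_const_mul, ← integral_sub j1
          ((integrable_finsetSum _ fun j _ => j3 j).const_mul _)]
        refine integral_congr_ae (Eventually.of_forall fun x => ?_)
        simp only [smul_eq_mul, mul_sub, Finset.mul_sum]
        congr 1
        · ring
        · exact Finset.sum_congr rfl fun j _ => by ring
      rw [e2, ← hw, e1]
      simp only [integral_pd_mul (hflux _) hφ1 hc, Finset.sum_neg_distrib]
      ring)
  have := (hcont.ae_eq_iff_eq volume continuous_const).1 hae
  exact sub_eq_zero.1 (congrFun this x)

/-- Energy bound from comparison with the identity map, whose loss is `d σ²`. -/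
lemma energy_bound {p : EuclideanSpace ℝ (Fin d) → ℝ}
    {r : EuclideanSpace ℝ (Fin d) → EuclideanSpace ℝ (Fin d)} {σ : ℝ}
    (hp : Continuous p) (hp0 : ∀ x, 0 < p x) (hp1 : ∫ x, p x = 1) (hr : ContDiff ℝ 2 r)
    (hfin : Integrable (fun x => p x * (‖r x - x‖ ^ 2 + σ ^ 2 * frobSq d (fderiv ℝ r x))))
    (hmin : ∀ s : EuclideanSpace ℝ (Fin d) → EuclideanSpace ℝ (Fin d), ContDiff ℝ 2 s →
      Integrable (fun x => p x * (‖s x - x‖ ^ 2 + σ ^ 2 * frobSq d (fderiv ℝ s x))) →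
        rcaeLoss d σ p r ≤ rcaeLoss d σ p s) (i : Fin d) :
    Integrable (fun x => p x * (r x i - x i) ^ 2) ∧
      ∫ x, p x * (r x i - x i) ^ 2 ≤ d * σ ^ 2 := by
  have hle : ∀ x, p x * (r x i - x i) ^ 2 ≤
      p x * (‖r x - x‖ ^ 2 + σ ^ 2 * frobSq d (fderiv ℝ r x)) := by
    intro x
    refine mul_le_mul_of_nonneg_left ?_ (hp0 x).le
    have h1 : ‖(r x - x) i‖ ≤ ‖r x - x‖ := PiLp.norm_apply_le _ i
    have h2 : (r x i - x i) ^ 2 ≤ ‖r x - x‖ ^ 2 := by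
      rw [← sq_abs]
      exact pow_le_pow_left₀ (abs_nonneg _) (by simpa using h1) 2
    have h3 : 0 ≤ frobSq d (fderiv ℝ r x) := Finset.sum_nonneg fun j _ => sq_nonneg _
    nlinarith [sq_nonneg σ, mul_nonneg (sq_nonneg σ) h3]
  have hric := (contDiff_coord hr i).continuous
  have hint : Integrable (fun x => p x * (r x i - x i) ^ 2) := by
    refine hfin.mono' (by fun_prop : Continuous _).aestronglyMeasurable
      (Eventually.of_forall fun x => ?_)
    rw [Real.norm_eq_abs, abs_of_nonneg (mul_nonneg (hp0 x).le (sq_nonneg _))]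
    exact hle x
  refine ⟨hint, (integral_mono hint hfin hle).trans ?_⟩
  have hpi : Integrable p := integrable_of_integral_eq_one hp1
  have hid : ∀ x : EuclideanSpace ℝ (Fin d), p x * (‖(fun y => y) x - x‖ ^ 2 +
      σ ^ 2 * frobSq d (fderiv ℝ (fun y : EuclideanSpace ℝ (Fin d) => y) x)) =
        p x * (d * σ ^ 2) := by
    intro x
    simp [frobSq, mul_comm]
  have h := hmin (fun y => y) contDiff_id (by simp only [hid]; exact hpi.mul_const _)
  unfold rcaeLoss at h
  simp only [hid] at h
  rwa [integral_mul_const, hp1, one_mul] at h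

end EulerLagrange

/-! ### Expansion of the minimizer -/

section GroundState

variable {d : ℕ}

/-- The operator `Δ - Δq/q`, which is conjugate to `Δ + ∇ log q² · ∇` under multiplication
by `q`. -/
noncomputable def schr (q f : EuclideanSpace ℝ (Fin d) → ℝ) : EuclideanSpace ℝ (Fin d) → ℝ :=
  fun x => lap f x - lap q x / q x * f x

lemma ContDiff.schr_smooth {q f : EuclideanSpace ℝ (Fin d) → ℝ} (hq : ContDiff ℝ (⊤ : ℕ∞) q)
    (hq0 : ∀ x, 0 < q x) (hf : ContDiff ℝ (⊤ : ℕ∞) f) : ContDiff ℝ (⊤ : ℕ∞) (schr q f) :=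
  hf.lap_smooth.sub ((hq.lap_smooth.div hq fun x => (hq0 x).ne').mul hf)

/-- After multiplication by `q = √p` the Euler–Lagrange equation has no first order term. -/
lemma ground_state {q : EuclideanSpace ℝ (Fin d) → ℝ}
    {r : EuclideanSpace ℝ (Fin d) → EuclideanSpace ℝ (Fin d)} {σ : ℝ} {i : Fin d}
    (hq : ContDiff ℝ 2 q) (hq0 : ∀ x, 0 < q x) (hr : ContDiff ℝ 2 r)
    (hEL : ∀ x, q x * q x * (r x i - x i) =
      σ ^ 2 * ∑ j, pd j (fun y => q y * q y * pd j (fun z => r z i) y) x)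
    (x : EuclideanSpace ℝ (Fin d)) :
    q x * (r x i - x i) - σ ^ 2 * schr q (fun y => q y * (r y i - y i)) x =
      σ ^ 2 * (2 * pd i q x) := by
  have hri := contDiff_coord hr i
  have hxi : ContDiff ℝ 2 (fun y : EuclideanSpace ℝ (Fin d) => y i) :=
    contDiff_coord contDiff_id i
  have hu : ContDiff ℝ 2 (fun y => r y i - y i) := hri.sub hxi
  have hq1 := hq.differentiable (by norm_num)
  have hpu : ∀ j, pd j (fun y => r y i - y i) =
      fun y => pd j (fun z => r z i) y - if i = j then 1 else 0 := by
    intro j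
    rw [pd_sub (hri.differentiable (by norm_num)) (hxi.differentiable (by norm_num))]
    funext y
    rw [pd_coord]
  have hlapu : lap (fun y => r y i - y i) = lap (fun z => r z i) := by
    funext y
    refine Finset.sum_congr rfl fun j _ => ?_
    rw [hpu, pd_sub ((hri.pd_one j).differentiable (by norm_num)) (differentiable_const _)]
    simp [pd]
  have hflux : ∑ j, pd j (fun y => q y * q y * pd j (fun z => r z i) y) x =
      q x * (2 * (∑ j, pd j q x * pd j (fun y => r y i - y i) x) + 2 * pd i q x +
        q x * lap (fun y => r y i - y i) x) := by
    have hsum : pd i q x = ∑ j, pd j q x * (if i = j then 1 else 0) := by simp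
    rw [hlapu, hsum]
    simp only [lap, Finset.mul_sum, ← Finset.sum_add_distrib]
    refine Finset.sum_congr rfl fun j _ => ?_
    rw [pd_mul (hq1.fun_mul hq1) ((hri.pd_one j).differentiable (by norm_num)), pd_mul hq1 hq1, hpu]
    ring
  have h := hEL x
  rw [hflux] at h
  have h' : q x * (r x i - x i) = σ ^ 2 *
      (2 * (∑ j, pd j q x * pd j (fun y => r y i - y i) x) + 2 * pd i q x +
        q x * lap (fun y => r y i - y i) x) :=
    mul_left_cancel₀ (hq0 x).ne' (by linarith)
  have hqx := (hq0 x).ne'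
  rw [schr, lap_mul hq hu]
  simp only
  rw [show lap q x / q x * (q x * (r x i - x i)) = lap q x * (r x i - x i) by field_simp]
  linarith

/-- The remainder after the first two terms of the expansion of `q (r - id)_i` in `σ²`. With
`T = Δ - Δq/q`, inverting `1 - σ²T` formally on `2σ² ∂ᵢq` produces the series
`σ² k + σ⁴ T k + ⋯` with `k = 2 ∂ᵢq`. -/
noncomputable def remainder (q : EuclideanSpace ℝ (Fin d) → ℝ) (i : Fin d)
    (r : ℝ → EuclideanSpace ℝ (Fin d) → EuclideanSpace ℝ (Fin d)) (σ : ℝ) :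
    EuclideanSpace ℝ (Fin d) → ℝ :=
  fun y => q y * (r σ y i - y i) -
    (σ ^ 2 * (2 * pd i q y) + σ ^ 4 * schr q (fun z => 2 * pd i q z) y)

lemma remainder_solves {q : EuclideanSpace ℝ (Fin d) → ℝ}
    {r : ℝ → EuclideanSpace ℝ (Fin d) → EuclideanSpace ℝ (Fin d)} {i : Fin d}
    (hq : ContDiff ℝ (⊤ : ℕ∞) q) (hq0 : ∀ x, 0 < q x) (hr : ∀ σ > 0, ContDiff ℝ 2 (r σ))
    (hEL : ∀ σ > 0, ∀ x, q x * q x * (r σ x i - x i) =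
      σ ^ 2 * ∑ j, pd j (fun y => q y * q y * pd j (fun z => r σ z i) y) x) :
    Solves (fun x => lap q x / q x) (schr q (schr q (fun z => 2 * pd i q z)))
      (remainder q i r) := by
  have hk : ContDiff ℝ (⊤ : ℕ∞) (fun z => 2 * pd i q z) := contDiff_const.mul (hq.pd_smooth i)
  have hTk := hq.schr_smooth hq0 hk
  have hTTk := hq.schr_smooth hq0 hTk
  have hk2 : ContDiff ℝ 2 (fun z => 2 * pd i q z) := hk.of_le (by norm_cast)
  have hTk2 : ContDiff ℝ 2 (schr q (fun z => 2 * pd i q z)) := hTk.of_le (by norm_cast)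
  have hq2 : ContDiff ℝ 2 q := hq.of_le (by norm_cast)
  have hY : ∀ σ > 0, ContDiff ℝ 2 (fun y => q y * (r σ y i - y i)) := fun σ hσ =>
    hq2.mul ((contDiff_coord (hr σ hσ) i).sub (contDiff_coord contDiff_id i))
  have h1 : ∀ σ : ℝ, ContDiff ℝ 2 (fun y => σ ^ 2 * (2 * pd i q y)) := fun σ =>
    contDiff_const.mul hk2
  have h2 : ∀ σ : ℝ, ContDiff ℝ 2 (fun y => σ ^ 4 * schr q (fun z => 2 * pd i q z) y) := fun σ =>
    contDiff_const.mul hTk2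
  refine ⟨(hq.lap_smooth.div hq fun x => (hq0 x).ne').continuous, hTTk.continuous,
    fun σ hσ => (hY σ hσ).sub ((h1 σ).add (h2 σ)), fun σ hσ y => ?_⟩
  have hg := ground_state hq2 hq0 (hr σ hσ) (hEL σ hσ) y
  have hl : lap (remainder q i r σ) y = lap (fun y => q y * (r σ y i - y i)) y -
      (σ ^ 2 * lap (fun z => 2 * pd i q z) y +
        σ ^ 4 * lap (schr q (fun z => 2 * pd i q z)) y) := by
    unfold remainder
    rw [lap_sub (hY σ hσ) ((h1 σ).add (h2 σ)), lap_add (h1 σ) (h2 σ), lap_const_mul hk2,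
      lap_const_mul hTk2]
  rw [hl]
  have e1 : lap (fun z => 2 * pd i q z) y = schr q (fun z => 2 * pd i q z) y +
      lap q y / q y * (2 * pd i q y) := by simp [schr]
  have e2 : lap (schr q (fun z => 2 * pd i q z)) y =
      schr q (schr q (fun z => 2 * pd i q z)) y +
        lap q y / q y * schr q (fun z => 2 * pd i q z) y := by
    rw [schr]; ring
  have e3 : lap (fun y => q y * (r σ y i - y i)) y = schr q (fun y => q y * (r σ y i - y i)) y +
      lap q y / q y * (q y * (r σ y i - y i)) := by simp [schr]
  rw [e1, e2, e3]
  simp only [remainder]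
  linear_combination hg

/-- The energy bound controls `q (r - id)_i` in `L²`, and the two explicit terms are locally
`O(σ²)`. -/
lemma remainder_localDecay {q : EuclideanSpace ℝ (Fin d) → ℝ}
    {r : ℝ → EuclideanSpace ℝ (Fin d) → EuclideanSpace ℝ (Fin d)} {i : Fin d}
    (hq : ContDiff ℝ (⊤ : ℕ∞) q) (hq0 : ∀ x, 0 < q x) (hr : ∀ σ > 0, ContDiff ℝ 2 (r σ))
    (hE : ∀ σ > 0, Integrable (fun x => q x * q x * (r σ x i - x i) ^ 2) ∧
      ∫ x, q x * q x * (r σ x i - x i) ^ 2 ≤ d * σ ^ 2) :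
    LocalDecay (remainder q i r) 2 := by
  have hk : ContDiff ℝ (⊤ : ℕ∞) (fun z => 2 * pd i q z) := contDiff_const.mul (hq.pd_smooth i)
  have hTk := (hq.schr_smooth hq0 hk).continuous
  have hkc := hk.continuous
  have hqc := hq.continuous
  set k := fun z => 2 * pd i q z with hk_def
  intro θ hθ hc
  obtain ⟨A, hA⟩ := hθ.bounded_above_of_compact_support hc
  have hA0 : 0 ≤ A := (norm_nonneg _).trans (hA 0)
  refine ⟨2 * A * d + ∫ z, 2 * (|k z| + |schr q k z|) ^ 2 * |θ z|, fun σ hσ hσ1 => ?_⟩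
  obtain ⟨hint, hle⟩ := hE σ hσ
  have hrc := (contDiff_coord (hr σ hσ) i).continuous
  have hZ : Continuous (remainder q i r σ) := by
    unfold remainder
    have : Continuous fun z => 2 * pd i q z := hkc
    fun_prop
  have int2 : Integrable (fun z => 2 * (|k z| + |schr q k z|) ^ 2 * |θ z|) :=
    (by fun_prop : Continuous _).integrable_of_hasCompactSupport hc.norm.mul_left
  have hpt : ∀ z, remainder q i r σ z ^ 2 * θ z ≤
      2 * A * (q z * q z * (r σ z i - z i) ^ 2) +
        σ ^ 2 * (2 * (|k z| + |schr q k z|) ^ 2 * |θ z|) := by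
    intro z
    have hS : |σ ^ 2 * k z + σ ^ 4 * schr q k z| ≤ σ * (|k z| + |schr q k z|) := by
      refine (abs_add_le _ _).trans ?_
      rw [abs_mul (σ ^ 2) (k z), abs_mul (σ ^ 4) (schr q k z), abs_of_pos (pow_pos hσ 2),
        abs_of_pos (pow_pos hσ 4), mul_add]
      gcongr
      · exact pow_le_of_le_one hσ.le hσ1 (by norm_num)
      · exact pow_le_of_le_one hσ.le hσ1 (by norm_num)
    have hS2 : (σ ^ 2 * k z + σ ^ 4 * schr q k z) ^ 2 ≤ σ ^ 2 * (|k z| + |schr q k z|) ^ 2 := by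
      rw [← mul_pow, ← sq_abs]
      exact pow_le_pow_left₀ (abs_nonneg _) hS 2
    have hrem : remainder q i r σ z = q z * (r σ z i - z i) -
        (σ ^ 2 * k z + σ ^ 4 * schr q k z) := rfl
    have hθA : |θ z| ≤ A := hA z
    calc remainder q i r σ z ^ 2 * θ z ≤ remainder q i r σ z ^ 2 * |θ z| :=
          mul_le_mul_of_nonneg_left (le_abs_self _) (sq_nonneg _)
      _ ≤ (2 * (q z * (r σ z i - z i)) ^ 2 +
            2 * (σ ^ 2 * (|k z| + |schr q k z|) ^ 2)) * |θ z| := by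
          refine mul_le_mul_of_nonneg_right ?_ (abs_nonneg _)
          rw [hrem]
          nlinarith [sq_nonneg (q z * (r σ z i - z i) + (σ ^ 2 * k z + σ ^ 4 * schr q k z))]
      _ = 2 * (q z * (r σ z i - z i)) ^ 2 * |θ z| +
            σ ^ 2 * (2 * (|k z| + |schr q k z|) ^ 2 * |θ z|) := by ring
      _ ≤ 2 * (q z * (r σ z i - z i)) ^ 2 * A +
            σ ^ 2 * (2 * (|k z| + |schr q k z|) ^ 2 * |θ z|) := by gcongr
      _ = _ := by ring
  have hmono := integral_mono
    ((by fun_prop : Continuous _).integrable_of_hasCompactSupport hc.mul_left)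
    ((hint.const_mul _).add (int2.const_mul _)) hpt
  refine hmono.trans ?_
  simp only [Pi.add_apply]
  rw [integral_add (hint.const_mul _) (int2.const_mul _), integral_const_mul, integral_const_mul]
  have := mul_le_mul_of_nonneg_left hle (by positivity : 0 ≤ 2 * A)
  linarith

/-- Entrywise form of the expansion of the Jacobian, with error `O(σ³)`. The function `g` stands
for `∂ᵢ log p`, which satisfies `q g = 2 ∂ᵢq`. -/
lemma entry_isBigO {q : EuclideanSpace ℝ (Fin d) → ℝ}
    {r : ℝ → EuclideanSpace ℝ (Fin d) → EuclideanSpace ℝ (Fin d)} {i : Fin d}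
    {g : EuclideanSpace ℝ (Fin d) → ℝ}
    (hq : ContDiff ℝ (⊤ : ℕ∞) q) (hq0 : ∀ x, 0 < q x) (hr : ∀ σ > 0, ContDiff ℝ 2 (r σ))
    (hg : Differentiable ℝ g) (hgq : ∀ x, q x * g x = 2 * pd i q x)
    (hEL : ∀ σ > 0, ∀ x, q x * q x * (r σ x i - x i) =
      σ ^ 2 * ∑ j, pd j (fun y => q y * q y * pd j (fun z => r σ z i) y) x)
    (hE : ∀ σ > 0, Integrable (fun x => q x * q x * (r σ x i - x i) ^ 2) ∧
      ∫ x, q x * q x * (r σ x i - x i) ^ 2 ≤ d * σ ^ 2)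
    (x : EuclideanSpace ℝ (Fin d)) (j : Fin d) :
    (fun σ => pd j (fun z => r σ z i) x - ((if i = j then 1 else 0) + σ ^ 2 * pd j g x))
      =O[𝓝[>] (0 : ℝ)] (fun σ => σ ^ 3) := by
  have hS := remainder_solves hq hq0 hr hEL
  have hd := remainder_localDecay hq hq0 hr hE
  obtain ⟨hZ, hpZ⟩ := hS.pointwise hd j x
  have hk : ContDiff ℝ (⊤ : ℕ∞) (fun z => 2 * pd i q z) := contDiff_const.mul (hq.pd_smooth i)
  have hTk := hq.schr_smooth hq0 hk
  set k := fun z => 2 * pd i q z with hk_def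
  have hpow : ∀ c : ℝ, (fun σ : ℝ => σ ^ 4 * c) =O[𝓝[>] (0 : ℝ)] (fun σ => σ ^ 3) := by
    intro c
    refine IsBigO.of_bound |c| ?_
    filter_upwards [Ioc_mem_nhdsGT one_pos] with σ hσ
    rw [norm_mul, Real.norm_eq_abs, Real.norm_eq_abs, Real.norm_eq_abs, mul_comm,
      abs_of_pos (pow_pos hσ.1 4), abs_of_pos (pow_pos hσ.1 3)]
    exact mul_le_mul_of_nonneg_left (pow_le_pow_of_le_one hσ.1.le hσ.2 (by norm_num))
      (abs_nonneg _)
  have hq1 := hq.differentiable (by simp)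
  have main := ((hpZ.add (hpow (pd j (schr q k) x))).const_mul_left (1 / q x)).sub
    ((hZ.add (hpow (schr q k x))).const_mul_left (pd j q x / q x ^ 2))
  refine main.congr' ?_ EventuallyEq.rfl
  filter_upwards [self_mem_nhdsWithin] with σ hσ
  have hri := contDiff_coord (hr σ hσ) i
  have hri1 := hri.differentiable (by norm_num)
  have hxi : Differentiable ℝ (fun y : EuclideanSpace ℝ (Fin d) => y i) :=
    (contDiff_coord (n := 1) contDiff_id i).differentiable (by norm_num)
  have hk1 := hk.differentiable (by simp)
  have hTk1 := hTk.differentiable (by simp)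
  have e0 : remainder q i r σ x = q x * (r σ x i - x i) -
      (σ ^ 2 * k x + σ ^ 4 * schr q k x) := rfl
  have e1 : pd j (remainder q i r σ) x = pd j q x * (r σ x i - x i) +
      q x * (pd j (fun z => r σ z i) x - if i = j then 1 else 0) -
      (σ ^ 2 * pd j k x + σ ^ 4 * pd j (schr q k) x) := by
    have : remainder q i r σ = fun y => q y * (r σ y i - y i) -
        (σ ^ 2 * k y + σ ^ 4 * schr q k y) := rfl
    rw [this, pd_sub (hq1.fun_mul (hri1.fun_sub hxi))
      ((hk1.const_mul _).fun_add (hTk1.const_mul _)),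
      pd_mul hq1 (hri1.fun_sub hxi), pd_sub hri1 hxi,
      pd_add (hk1.const_mul _) (hTk1.const_mul _), pd_const_mul hk1, pd_const_mul hTk1]
    simp only [pd_coord]
  have e2 : pd j k x = pd j q x * g x + q x * pd j g x := by
    rw [show k = fun y => q y * g y from funext fun y => (hgq y).symm, pd_mul hq1 hg]
  have e3 : k x = q x * g x := (hgq x).symm
  have hqx := (hq0 x).ne'
  simp only [e0, e1, e2, e3]
  field_simp
  ring

end GroundState

/-- An operator norm is controlled by the sum of the absolute values of the matrix entries. -/
lemma norm_le_sum_entries {d : ℕ}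
    (A : EuclideanSpace ℝ (Fin d) →L[ℝ] EuclideanSpace ℝ (Fin d)) :
    ‖A‖ ≤ ∑ j, ∑ i, |(A (EuclideanSpace.single j 1)) i| := by
  have h1 : ∀ v : EuclideanSpace ℝ (Fin d), ‖v‖ ≤ ∑ i, |v i| := by
    intro v
    conv_lhs => rw [← sum_single v]
    refine (norm_sum_le _ _).trans (Finset.sum_le_sum fun i _ => ?_)
    rw [norm_smul]; simp
  refine A.opNorm_le_bound (Finset.sum_nonneg fun j _ => Finset.sum_nonneg fun i _ => abs_nonneg _)
    fun v => ?_
  conv_lhs => rw [← sum_single v, map_sum]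
  rw [Finset.sum_mul]
  refine (norm_sum_le _ _).trans (Finset.sum_le_sum fun j _ => ?_)
  rw [map_smul, norm_smul, mul_comm]
  exact mul_le_mul (h1 _) (PiLp.norm_apply_le v j) (norm_nonneg _)
    (Finset.sum_nonneg fun i _ => abs_nonneg _)

/-! ### Jacobian asymptotics -/

/-- Let `p` be a smooth, everywhere positive probability density on `ℝ^d`,
and for each `σ > 0` let `r_σ` be a twice continuously differentiable minimizer of the RCAE
loss `L_σ` among all twice continuously differentiable functions with finite loss. Then for
every fixed `x`, the Jacobian satisfies
`Dr_σ(x) = I + σ² ∇²log p(x) + o(σ²)` as `σ → 0⁺`, where `∇²log p(x)` is the Hessian of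
`log p` at `x`. -/
theorem rcae_minimizer_jacobian_asymptotics
    (d : ℕ) (p : EuclideanSpace ℝ (Fin d) → ℝ)
    (hp_smooth : ContDiff ℝ (⊤ : ℕ∞) p)
    (hp_pos : ∀ x, 0 < p x)
    (hp_int : ∫ x, p x = 1)
    (r : ℝ → EuclideanSpace ℝ (Fin d) → EuclideanSpace ℝ (Fin d))
    (hr_smooth : ∀ σ > (0:ℝ), ContDiff ℝ 2 (r σ))
    (hr_fin : ∀ σ > (0:ℝ), Integrable (fun x =>
        p x * (‖r σ x - x‖ ^ 2 + σ ^ 2 * frobSq d (fderiv ℝ (r σ) x))))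
    (hr_min : ∀ σ > (0:ℝ),
        ∀ s : EuclideanSpace ℝ (Fin d) → EuclideanSpace ℝ (Fin d), ContDiff ℝ 2 s →
          Integrable (fun x =>
            p x * (‖s x - x‖ ^ 2 + σ ^ 2 * frobSq d (fderiv ℝ s x))) →
          rcaeLoss d σ p (r σ) ≤ rcaeLoss d σ p s) :
    ∀ x : EuclideanSpace ℝ (Fin d),
      (fun σ => ‖fderiv ℝ (r σ) x
          - (ContinuousLinearMap.id ℝ (EuclideanSpace ℝ (Fin d))
            + σ ^ 2 • fderiv ℝ (fun y => gradient (fun z => Real.log (p z)) y) x)‖)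
        =o[𝓝[>] (0:ℝ)] fun σ => σ ^ 2 := by
  intro x
  set q : EuclideanSpace ℝ (Fin d) → ℝ := fun y => Real.sqrt (p y) with hq_def
  have hq : ContDiff ℝ (⊤ : ℕ∞) q := hp_smooth.sqrt fun y => (hp_pos y).ne'
  have hq0 : ∀ y, 0 < q y := fun y => Real.sqrt_pos.2 (hp_pos y)
  have hqq : ∀ y, p y = q y * q y := fun y => (Real.mul_self_sqrt (hp_pos y).le).symm
  have hpq : p = fun y => q y * q y := funext hqq
  have hlog : ContDiff ℝ (⊤ : ℕ∞) (fun z => Real.log (p z)) :=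
    hp_smooth.log fun y => (hp_pos y).ne'
  have hgrad : ∀ i, (fun y => gradient (fun z => Real.log (p z)) y i) =
      pd i (fun z => Real.log (p z)) := by
    intro i
    funext y
    have h := InnerProductSpace.toDual_symm_apply (𝕜 := ℝ)
      (x := EuclideanSpace.single i (1 : ℝ)) (y := fderiv ℝ (fun z => Real.log (p z)) y)
    rw [EuclideanSpace.inner_single_right] at h
    simpa [gradient, pd] using h
  have hgd : Differentiable ℝ (fun y => gradient (fun z => Real.log (p z)) y) := by
    rw [differentiable_euclidean]
    intro i
    rw [hgrad]
    exact (hlog.pd_smooth i).differentiable (by simp)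
  -- `∇ log p = 2 ∇q / q` for `q = √p`.
  have hgq : ∀ i y, q y * pd i (fun z => Real.log (p z)) y = 2 * pd i q y := by
    intro i y
    have hq1 := hq.differentiable (by simp)
    have h1 : pd i p y = 2 * q y * pd i q y := by
      rw [hpq, pd_mul hq1 hq1]; ring
    have h2 : pd i (fun z => Real.log (p z)) y = (p y)⁻¹ * pd i p y := by
      simp only [pd]
      rw [(((hp_smooth.differentiable (by simp)) y).hasFDerivAt.log (hp_pos y).ne').fderiv]
      simp
    have := (hq0 y).ne'
    rw [h2, h1, hqq y]
    field_simp
  have hentry : ∀ i j, (fun σ => pd j (fun z => r σ z i) x - ((if i = j then 1 else 0) +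
      σ ^ 2 * pd j (pd i (fun z => Real.log (p z))) x)) =O[𝓝[>] (0 : ℝ)] (fun σ => σ ^ 3) := by
    intro i j
    refine entry_isBigO hq hq0 hr_smooth ((hlog.pd_smooth i).differentiable (by simp)) (hgq i)
      (fun σ hσ y => ?_) (fun σ hσ => ?_) x j
    · simpa only [hqq] using euler_lagrange (hp_smooth.of_le (by norm_num)) hp_pos
        (hr_smooth σ hσ) (hr_fin σ hσ) (hr_min σ hσ) i y
    · simpa only [hqq] using energy_bound hp_smooth.continuous hp_pos hp_int
        (hr_smooth σ hσ) (hr_fin σ hσ) (hr_min σ hσ) i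
  have hbig : (fun σ => ‖fderiv ℝ (r σ) x
      - (ContinuousLinearMap.id ℝ (EuclideanSpace ℝ (Fin d))
        + σ ^ 2 • fderiv ℝ (fun y => gradient (fun z => Real.log (p z)) y) x)‖)
      =O[𝓝[>] (0 : ℝ)] (fun σ => σ ^ 3) := by
    have hsum : (fun σ => ∑ j, ∑ i, ‖pd j (fun z => r σ z i) x - ((if i = j then 1 else 0) +
        σ ^ 2 * pd j (pd i (fun z => Real.log (p z))) x)‖) =O[𝓝[>] (0 : ℝ)] (fun σ => σ ^ 3) :=
      IsBigO.fun_sum fun j _ => IsBigO.fun_sum fun i _ => (hentry i j).norm_left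
    refine IsBigO.trans ?_ hsum
    refine IsBigO.of_bound 1 ?_
    filter_upwards [self_mem_nhdsWithin] with σ hσ
    rw [norm_norm, one_mul]
    refine (norm_le_sum_entries _).trans ((le_of_eq ?_).trans (le_abs_self _))
    refine Finset.sum_congr rfl fun j _ => Finset.sum_congr rfl fun i _ => ?_
    have h1 := fderiv_coord (((hr_smooth σ hσ).differentiable (by norm_num)) x) i j
    have h2 := fderiv_coord (hgd x) i j
    rw [hgrad] at h2
    rw [Real.norm_eq_abs, ← h1, ← h2]
    simp
  refine hbig.trans_isLittleO ?_
  exact (isLittleO_pow_pow (by norm_num : 2 < 3)).mono nhdsWithin_le_nhds
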